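/- arXiv:0804.3032 — 2 statements merged into one kernel-verified Lean document; each statement's English description precedes it below -/
import Mathlib

section
/- Let β > 0 and let m ≥ 1 be an integer. There exists K > 0 depending only on m and β such that for all integers n ≥ 1, |E[Σ_{1≤a<b<c≤n} m(a,b)·m(a,c)] − (m(2+β)/β + m(m−1)(1+β)/β) · n| ≤ K · n^{2/(2+β)}. -/
open Finset

/-- A parent sequence of length `N`: for each `t ∈ {2,…,N}` an index `f t ∈ {1,…,t-1}`. -/
def ParentSeq (N : ℕ) : Type :=
  ∀ t : Set.Icc 2 N, Set.Icc 1 ((t : ℕ) - 1)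

noncomputable instance (N : ℕ) : Fintype (ParentSeq N) := by
  unfold ParentSeq
  classical
  infer_instance

/-- The value of a parent sequence at `j` (junk value `0` outside `{2,…,N}`). -/
def pval {N : ℕ} (f : ParentSeq N) (j : ℕ) : ℕ :=
  if h : 2 ≤ j ∧ j ≤ N then (f ⟨j, Set.mem_Icc.mpr h⟩ : ℕ) else 0

/-- The degree `d_t(v_i)` of vertex `i` at time `t` in the tree determined by `f`. -/
def deg {N : ℕ} (f : ParentSeq N) (t i : ℕ) : ℕ :=
  ((Finset.Icc 2 t).filter (fun j => pval f j = i)).card + (if 2 ≤ i then 1 else 0)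

/-- The Móri probability of the parent sequence `f`. -/
noncomputable def moriP {N : ℕ} (β : ℝ) (f : ParentSeq N) : ℝ :=
  ∏ t ∈ Finset.Icc 2 N, ((deg f (t - 1) (pval f t) : ℝ) + β) / ((2 + β) * ((t : ℝ) - 1) - 2)

/-- Expectation of `X` under the Móri measure on parent sequences of length `N`. -/
noncomputable def moriE (N : ℕ) (β : ℝ) (X : ParentSeq N → ℝ) : ℝ :=
  ∑ f : ParentSeq N, moriP β f * X f

open Classical in
/-- Probability of an event under the Móri measure on parent sequences of length `N`. -/
noncomputable def moriPr (N : ℕ) (β : ℝ) (p : ParentSeq N → Prop) : ℝ :=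
  ∑ f : ParentSeq N, if p f then moriP β f else 0

/-- The index of the merged vertex containing tree vertex `t` when merging in blocks of `m`. -/
def blk (m t : ℕ) : ℕ := (t - 1) / m + 1

/-- The number `m(a,b)` of edges joining `u_a` and `u_b` in the Móri graph `G^n_{m,β}`. -/
def mult (n m : ℕ) (f : ParentSeq (n * m)) (a b : ℕ) : ℕ :=
  ((Finset.Icc 2 (n * m)).filter (fun t =>
    (blk m t = a ∧ blk m (pval f t) = b) ∨ (blk m t = b ∧ blk m (pval f t) = a))).card

/-- The degree `d(u_i)` of the merged vertex `u_i` in the Móri graph `G^n_{m,β}`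
(a loop contributes `2`). -/
def degU (n m : ℕ) (f : ParentSeq (n * m)) (i : ℕ) : ℕ :=
  ((Finset.Icc 2 (n * m)).filter (fun t => blk m t = i)).card +
  ((Finset.Icc 2 (n * m)).filter (fun t => blk m (pval f t) = i)).card

/-!
The pairs are counted at their younger edge: when a vertex is attached to block `a`, the count grows
by the number of edges to `a` from the blocks strictly between `a` and the current one. This differs
from the in-degree of `a` only by the loops at `a` and the edges to `a` from the current block. A
block is current for only `m` steps, so these corrections contribute `O(t^{2/(2+β)})` in
expectation, and twice the count can be compared with the sum of squared in-degrees minus the number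
of edges.

The expected sum of squared in-degrees satisfies a linear recursion with factor `1 + 2 / S_t`, where
`S_t = (2 + β) t - 2` is the total attachment weight. It has a particular solution proportional to
`S_t`, which gives the main term, while the homogeneous solution grows like `t^{2/(2+β)}`.
-/

namespace Mori

variable {m t : ℕ}

/-! ### Blocks of `m` consecutive vertices -/

section Blocks

lemma blk_mono (m : ℕ) : Monotone (blk m) := fun _ _ h =>
  Nat.add_le_add_right (Nat.div_le_div_right (Nat.sub_le_sub_right h 1)) 1

lemma one_le_blk (m j : ℕ) : 1 ≤ blk m j := Nat.le_add_left 1 _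

lemma blk_mem_Icc {n v : ℕ} (hv : v ∈ Icc 1 (n * m)) : blk m v ∈ Icc 1 n := by
  rw [mem_Icc] at hv ⊢
  exact ⟨one_le_blk m v, Nat.div_lt_of_lt_mul (by rw [mul_comm m n]; omega)⟩

/-- The number of the first `t` tree vertices that lie in block `a`. -/
def blockSize (m t a : ℕ) : ℕ := #{j ∈ Icc 1 t | blk m j = a}

lemma blockSize_add_one (hm : 0 < m) (t k : ℕ) :
    blockSize m t (k + 1) = min (k * m + m) t - k * m := by
  have hfilter : {j ∈ Icc 1 t | blk m j = k + 1} = Ioc (k * m) (min (k * m + m) t) := by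
    ext j
    rw [mem_filter, mem_Icc, mem_Ioc, blk, Nat.add_right_cancel_iff, Nat.div_eq_iff hm]
    omega
  rw [blockSize, hfilter, Nat.card_Ioc]

lemma blockSize_le (hm : 0 < m) {a : ℕ} (ha : 1 ≤ a) : blockSize m t a ≤ m := by
  obtain ⟨k, rfl⟩ := Nat.exists_eq_add_of_le' ha
  rw [blockSize_add_one hm]
  omega

lemma blockSize_of_lt_current (hm : 0 < m) {a : ℕ} (ha : 1 ≤ a) (h : a < blk m (t + 1)) :
    blockSize m t a = m := by
  obtain ⟨k, rfl⟩ := Nat.exists_eq_add_of_le' ha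
  have hk : (k + 1) * m ≤ t := (Nat.le_div_iff_mul_le hm).1 (Nat.lt_succ_iff.1 h)
  rw [add_one_mul] at hk
  rw [blockSize_add_one hm]
  omega

lemma blockSize_current (hm : 0 < m) (t : ℕ) : blockSize m t (blk m (t + 1)) = t % m := by
  have hdiv := Nat.div_add_mod' t m
  have hmod := Nat.mod_lt t hm
  rw [blk, Nat.add_sub_cancel, blockSize_add_one hm]
  omega

lemma blk_succ_of_mod_ne_zero (h : (t + 1) % m ≠ 0) : blk m (t + 1 + 1) = blk m (t + 1) := by
  simp only [blk, Nat.add_sub_cancel, Nat.succ_div, if_neg fun hd => h (Nat.mod_eq_zero_of_dvd hd),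
    add_zero]

lemma mod_succ_of_mod_ne_zero (h : (t + 1) % m ≠ 0) : (t + 1) % m = t % m + 1 := by
  have hblk := blk_succ_of_mod_ne_zero h
  simp only [blk, Nat.add_sub_cancel, Nat.add_right_cancel_iff] at hblk
  have h₁ := Nat.div_add_mod (t + 1) m
  have h₂ := Nat.div_add_mod t m
  rw [hblk] at h₁
  omega

lemma le_mul_of_reset_of_step (hm : 0 < m) {B : ℝ} (hB : 0 ≤ B) {x : ℕ → ℝ} (h_one : x 1 ≤ B)
    (h_reset : ∀ t, 1 ≤ t → t % m = 0 → x t ≤ 0)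
    (h_step : ∀ t, 1 ≤ t → (t + 1) % m ≠ 0 → x (t + 1) ≤ x t + B) {t : ℕ} (ht : 1 ≤ t) :
    x t ≤ B * m := by
  have hmod : x t ≤ B * (t % m : ℕ) := by
    induction t, ht using Nat.le_induction with
    | base =>
      by_cases h₀ : 1 % m = 0
      · simpa only [h₀, Nat.cast_zero, mul_zero] using h_reset 1 le_rfl h₀
      · rwa [mod_succ_of_mod_ne_zero (t := 0) h₀, Nat.zero_mod, zero_add, Nat.cast_one, mul_one]
    | succ t ht ih =>
      by_cases h₀ : (t + 1) % m = 0
      · simpa only [h₀, Nat.cast_zero, mul_zero] using h_reset (t + 1) (by omega) h₀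
      · rw [mod_succ_of_mod_ne_zero h₀, Nat.cast_add_one, mul_add_one]
        linarith [h_step t ht h₀]
  have hle : ((t % m : ℕ) : ℝ) ≤ m := mod_cast (Nat.mod_lt t hm).le
  exact hmod.trans (mul_le_mul_of_nonneg_left hle hB)

end Blocks
/-! ### Growth of real sequences -/

section Growth

variable {β : ℝ}

/-- The normalising constant of the Móri measure: the sum of `d_t(v_i) + β` over `i ≤ t`. -/
def totalWeight (β : ℝ) (t : ℕ) : ℝ := (2 + β) * t - 2

lemma totalWeight_one (β : ℝ) : totalWeight β 1 = β := by
  rw [totalWeight, Nat.cast_one]; ring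

lemma totalWeight_succ (β : ℝ) (t : ℕ) :
    totalWeight β (t + 1) = totalWeight β t + (2 + β) := by
  rw [totalWeight, totalWeight, Nat.cast_add_one]; ring

lemma mul_le_totalWeight (β : ℝ) (ht : 1 ≤ t) : β * t ≤ totalWeight β t := by
  have ht' : (1 : ℝ) ≤ t := mod_cast ht
  rw [totalWeight]
  linarith

lemma le_totalWeight (hβ : 0 < β) (ht : 1 ≤ t) : β ≤ totalWeight β t :=
  (le_mul_of_one_le_right hβ.le (mod_cast ht)).trans (mul_le_totalWeight β ht)

lemma totalWeight_pos (hβ : 0 < β) (ht : 1 ≤ t) : 0 < totalWeight β t :=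
  hβ.trans_le (le_totalWeight hβ ht)

lemma rpow_mul_le_rpow_succ (hβ : 0 < β) (ht : 1 ≤ t) :
    (t : ℝ) ^ (2 / (2 + β)) * (1 + 2 / totalWeight β (t + 1))
      ≤ ((t + 1 : ℕ) : ℝ) ^ (2 / (2 + β)) := by
  have ht' : (1 : ℝ) ≤ t := mod_cast ht
  have hS := totalWeight_pos hβ (Nat.le_add_left 1 t)
  set s : ℝ := (t : ℝ) + 1
  have hs : 0 < s := by positivity
  have hs₁ : 1 ≤ s := by linarith
  have bernoulli : (1 + -(1 / s)) ^ (2 / (2 + β)) ≤ 1 + 2 / (2 + β) * -(1 / s) :=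
    rpow_one_add_le_one_add_mul_self (neg_le_neg (div_le_one_of_le₀ hs₁ hs.le))
      (by positivity) (div_le_one_of_le₀ (by linarith) (by linarith))
  have hquot : 1 + -(1 / s) = t / s := by field_simp; ring
  rw [hquot, Real.div_rpow (by positivity) hs.le, div_le_iff₀ (Real.rpow_pos_of_pos hs _)]
    at bernoulli
  have hinv : (1 + 2 / (2 + β) * -(1 / s)) * (1 + 2 / totalWeight β (t + 1)) = 1 := by
    have hS' : totalWeight β (t + 1) = (2 + β) * s - 2 := by rw [totalWeight, Nat.cast_add_one]
    rw [hS'] at hS ⊢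
    have h₂ : 2 + β ≠ 0 := by positivity
    field_simp
    ring
  calc (t : ℝ) ^ (2 / (2 + β)) * (1 + 2 / totalWeight β (t + 1))
      ≤ (1 + 2 / (2 + β) * -(1 / s)) * s ^ (2 / (2 + β)) * (1 + 2 / totalWeight β (t + 1)) :=
        mul_le_mul_of_nonneg_right bernoulli (by positivity)
    _ = s ^ (2 / (2 + β)) := by rw [mul_right_comm, hinv, one_mul]
    _ = ((t + 1 : ℕ) : ℝ) ^ (2 / (2 + β)) := by rw [Nat.cast_add_one]

lemma prod_one_add_le_rpow (hβ : 0 < β) (ht : 1 ≤ t) :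
    ∏ s ∈ Ico 1 t, (1 + 2 / totalWeight β s) ≤ (1 + 2 / β) * (t : ℝ) ^ (2 / (2 + β)) := by
  have shifted : ∀ t : ℕ, 1 ≤ t →
      ∏ s ∈ Ico 1 (t + 1), (1 + 2 / totalWeight β s) ≤ (1 + 2 / β) * (t : ℝ) ^ (2 / (2 + β)) := by
    intro t ht
    induction t, ht using Nat.le_induction with
    | base => simp [totalWeight]
    | succ t ht ih =>
      have hS := totalWeight_pos hβ (Nat.le_add_left 1 t)
      calc ∏ s ∈ Ico 1 (t + 1 + 1), (1 + 2 / totalWeight β s)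
          ≤ (1 + 2 / β) * (t : ℝ) ^ (2 / (2 + β)) * (1 + 2 / totalWeight β (t + 1)) := by
            rw [prod_Ico_succ_top (by omega)]
            exact mul_le_mul_of_nonneg_right ih (by positivity)
        _ ≤ (1 + 2 / β) * ((t + 1 : ℕ) : ℝ) ^ (2 / (2 + β)) := by
            rw [mul_assoc]
            exact mul_le_mul_of_nonneg_left (rpow_mul_le_rpow_succ hβ ht) (by positivity)
  obtain ⟨s, rfl⟩ := Nat.exists_eq_add_of_le' ht
  obtain rfl | hs := Nat.eq_zero_or_pos s
  · simpa using by positivity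
  · refine (shifted s hs).trans ?_
    gcongr
    exact Nat.le_succ s

lemma le_rpow_of_le_mul_add_div (hβ : 0 < β) {C X : ℝ} (hC : 0 ≤ C) (hX : 0 ≤ X) {x : ℕ → ℝ}
    (h_one : x 1 ≤ X)
    (h_step : ∀ t, 1 ≤ t → x (t + 1) ≤ x t * (1 + 2 / totalWeight β t) + C / totalWeight β t)
    (ht : 1 ≤ t) : x t ≤ (X + C / 2) * (1 + 2 / β) * (t : ℝ) ^ (2 / (2 + β)) := by
  -- The shift by `C / 2` absorbs the inhomogeneous term.
  have hprod : x t + C / 2 ≤ (X + C / 2) * ∏ s ∈ Ico 1 t, (1 + 2 / totalWeight β s) := by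
    induction t, ht using Nat.le_induction with
    | base => simpa using h_one
    | succ t ht ih =>
      have hS := totalWeight_pos hβ ht
      calc x (t + 1) + C / 2
          ≤ (x t + C / 2) * (1 + 2 / totalWeight β t) := by
            linear_combination h_step t ht
        _ ≤ _ := by
            rw [prod_Ico_succ_top ht, ← mul_assoc]
            exact mul_le_mul_of_nonneg_right ih (by positivity)
  have hbound := mul_le_mul_of_nonneg_left (prod_one_add_le_rpow hβ ht)
    (by positivity : 0 ≤ X + C / 2)
  linarith

lemma le_rpow_of_le_add_rpow_div (hβ : 0 < β) {C X : ℝ} (hC : 0 ≤ C) (hX : 0 ≤ X) {x : ℕ → ℝ}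
    (h_one : x 1 ≤ X)
    (h_step : ∀ t : ℕ, 1 ≤ t →
      x (t + 1) ≤ x t + C * (t : ℝ) ^ (2 / (2 + β)) / totalWeight β t)
    (ht : 1 ≤ t) : x t ≤ (X + C * (1 + β) / β) * (t : ℝ) ^ (2 / (2 + β)) := by
  induction t, ht using Nat.le_induction with
  | base =>
    rw [Nat.cast_one, Real.one_rpow, mul_one]
    exact h_one.trans (le_add_of_nonneg_right (by positivity))
  | succ t ht ih =>
    have hS := totalWeight_pos hβ ht
    have hS' := totalWeight_pos hβ (Nat.le_add_left 1 t)
    set K := X + C * (1 + β) / β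
    have hcompare : C / totalWeight β t ≤ K * (2 / totalWeight β (t + 1)) := by
      have hratio : β * totalWeight β (t + 1) ≤ 2 * (1 + β) * totalWeight β t := by
        rw [totalWeight_succ]
        nlinarith [le_totalWeight hβ ht]
      calc C / totalWeight β t
          ≤ C * (2 * (1 + β)) / (β * totalWeight β (t + 1)) := by
            rw [div_le_div_iff₀ hS (by positivity), mul_assoc]
            exact mul_le_mul_of_nonneg_left hratio hC
        _ = C * (1 + β) / β * (2 / totalWeight β (t + 1)) := by field_simp
        _ ≤ K * (2 / totalWeight β (t + 1)) :=
            mul_le_mul_of_nonneg_right (le_add_of_nonneg_left hX) (by positivity)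
    calc x (t + 1) ≤ x t + C * (t : ℝ) ^ (2 / (2 + β)) / totalWeight β t := h_step t ht
      _ = x t + (t : ℝ) ^ (2 / (2 + β)) * (C / totalWeight β t) := by ring
      _ ≤ K * (t : ℝ) ^ (2 / (2 + β))
          + (t : ℝ) ^ (2 / (2 + β)) * (K * (2 / totalWeight β (t + 1))) := by gcongr
      _ = K * ((t : ℝ) ^ (2 / (2 + β)) * (1 + 2 / totalWeight β (t + 1))) := by ring
      _ ≤ K * ((t + 1 : ℕ) : ℝ) ^ (2 / (2 + β)) :=
          mul_le_mul_of_nonneg_left (rpow_mul_le_rpow_succ hβ ht) (by positivity)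

end Growth

/-! ### Parent maps and the Móri expectation -/

section Expectation

variable {p : ℕ → ℕ} {i : ℕ} {β : ℝ} {φ ψ : ℕ → ℝ} {F G : (ℕ → ℕ) → ℝ}

/-- `p j` is a vertex older than `v_j` for `2 ≤ j ≤ t`. Trees are encoded by total functions, whose
values outside `{2,…,t}` are irrelevant, so that trees of all sizes live in one type. -/
def IsParentMap (t : ℕ) (p : ℕ → ℕ) : Prop := ∀ j ∈ Icc 2 t, p j ∈ Ico 1 j

/-- The degree `d_t(v_i)` in the tree encoded by `p`. -/
def treeDeg (p : ℕ → ℕ) (t i : ℕ) : ℕ := #{j ∈ Icc 2 t | p j = i} + if 2 ≤ i then 1 else 0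

lemma isParentMap_pval {N : ℕ} (f : ParentSeq N) : IsParentMap N (pval f) := by
  intro j hj
  have hj' := mem_Icc.1 hj
  have hf := Set.mem_Icc.1 (f ⟨j, hj'⟩).2
  rw [pval, dif_pos hj', mem_Ico]
  dsimp only at hf
  omega

lemma IsParentMap.update (hp : IsParentMap t p) (hi : i ∈ Icc 1 t) :
    IsParentMap (t + 1) (Function.update p (t + 1) i) := by
  intro j hj
  obtain rfl | hne := eq_or_ne j (t + 1)
  · rw [Function.update_self]
    exact Ico_succ_right_eq_Icc 1 t ▸ hi
  · rw [Function.update_of_ne hne]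
    refine hp j ?_
    rw [mem_Icc] at hj ⊢
    omega

lemma IsParentMap.parent_mem_Icc (hp : IsParentMap t p) {j : ℕ} (hj : j ∈ Icc 2 t) :
    p j ∈ Icc 1 t := by
  have hpj := hp j hj
  rw [mem_Icc] at hj ⊢
  rw [mem_Ico] at hpj
  omega

lemma sum_update_succ {M : Type*} [AddCommMonoid M] (g : ℕ → ℕ → M) (ht : 1 ≤ t) :
    ∑ j ∈ Icc 2 (t + 1), g (Function.update p (t + 1) i j) j
      = ∑ j ∈ Icc 2 t, g (p j) j + g i (t + 1) := by
  rw [sum_Icc_succ_top (by omega), Function.update_self]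
  congr 1
  refine sum_congr rfl fun j hj => ?_
  rw [Function.update_of_ne (Nat.lt_succ_of_le (mem_Icc.1 hj).2).ne]

lemma treeDeg_update (p : ℕ → ℕ) {t N : ℕ} (h : t ≤ N) (i k : ℕ) :
    treeDeg (Function.update p (N + 1) i) t k = treeDeg p t k := by
  rw [treeDeg, treeDeg]
  congr 2
  refine filter_congr fun j hj => ?_
  rw [Function.update_of_ne (by rw [mem_Icc] at hj; omega)]

/-- The parent sequence of length `N + 1` in which vertex `N + 1` is attached to vertex `i` of the
tree of `f`. -/
def attach {N : ℕ} (f : ParentSeq N) (i : Set.Icc 1 N) : ParentSeq (N + 1) := fun t =>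
  if h : (t : ℕ) ≤ N then f ⟨t, t.2.1, h⟩ else ⟨i, i.2.1, by have := i.2.2; omega⟩

lemma pval_attach {N : ℕ} (hN : 1 ≤ N) (f : ParentSeq N) (i : Set.Icc 1 N) :
    pval (attach f i) = Function.update (pval f) (N + 1) i := by
  funext j
  obtain rfl | hj := eq_or_ne j (N + 1)
  · rw [Function.update_self, pval, dif_pos (by omega), attach, dif_neg (by simp)]
  · rw [Function.update_of_ne hj]
    by_cases h : 2 ≤ j ∧ j ≤ N
    · rw [pval, pval, dif_pos (by omega), dif_pos h, attach, dif_pos h.2]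
    · rw [pval, pval, dif_neg (by omega), dif_neg h]

lemma pval_injective (N : ℕ) : Function.Injective (pval (N := N)) := by
  intro f g h
  funext t
  have ht := congrFun h t
  have hmem := Set.mem_Icc.1 t.2
  rw [pval, pval, dif_pos hmem, dif_pos hmem] at ht
  exact Subtype.ext ht

lemma attach_bijective {N : ℕ} (hN : 1 ≤ N) :
    Function.Bijective fun x : ParentSeq N × Set.Icc 1 N => attach x.1 x.2 := by
  constructor
  · rintro ⟨f, i⟩ ⟨g, k⟩ h
    have hpval := congrArg pval h
    simp only [pval_attach hN] at hpval
    have hik : (i : ℕ) = k := by simpa using congrFun hpval (N + 1)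
    have hfg : f = g := by
      refine pval_injective N (funext fun j => ?_)
      by_cases hj : j = N + 1
      · rw [pval, pval, dif_neg (by omega), dif_neg (by omega)]
      · simpa [Function.update_of_ne hj] using congrFun hpval j
    rw [hfg, Subtype.ext hik]
  · intro f
    have hlast := mem_Ico.1 (isParentMap_pval f (N + 1) (by rw [mem_Icc]; omega))
    let g : ParentSeq N := fun t => f ⟨t, t.2.1, t.2.2.trans N.le_succ⟩
    have hg : ∀ j ≠ N + 1, pval g j = pval f j := fun j hj => by
      by_cases h : 2 ≤ j ∧ j ≤ N
      · rw [pval, pval, dif_pos h, dif_pos (by omega)]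
      · rw [pval, pval, dif_neg h, dif_neg (by omega)]
    refine ⟨(g, ⟨pval f (N + 1), hlast.1, by omega⟩), pval_injective _ ?_⟩
    rw [pval_attach hN]
    refine funext fun j => ?_
    obtain rfl | hj := eq_or_ne j (N + 1)
    · rw [Function.update_self]
    · rw [Function.update_of_ne hj, hg j hj]

lemma moriP_attach (β : ℝ) {N : ℕ} (hN : 1 ≤ N) (f : ParentSeq N) (i : Set.Icc 1 N) :
    moriP β (attach f i)
      = moriP β f * ((treeDeg (pval f) N i + β) / totalWeight β N) := by
  have deg_attach : ∀ {t : ℕ} (k : ℕ), t ≤ N → deg (attach f i) t k = deg f t k := fun k h => by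
    change treeDeg (pval (attach f i)) _ k = treeDeg (pval f) _ k
    rw [pval_attach hN, treeDeg_update _ h]
  rw [moriP, prod_Icc_succ_top (by omega), moriP]
  congr 1
  · refine prod_congr rfl fun t ht => ?_
    rw [mem_Icc] at ht
    rw [deg_attach _ (by omega), pval_attach hN, Function.update_of_ne (by omega)]
  · rw [Nat.add_sub_cancel, deg_attach _ le_rfl, pval_attach hN, Function.update_self,
      Nat.cast_add_one, add_sub_cancel_right]
    rfl

lemma moriP_nonneg (hβ : 0 < β) {N : ℕ} (f : ParentSeq N) : 0 ≤ moriP β f := by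
  refine prod_nonneg fun t ht => div_nonneg (by positivity) ?_
  have ht' : (2 : ℝ) ≤ t := mod_cast (mem_Icc.1 ht).1
  nlinarith

/-- Expectation of a function of the random parent map of the Móri tree with `t` vertices. -/
noncomputable def expect (β : ℝ) (t : ℕ) (F : (ℕ → ℕ) → ℝ) : ℝ := moriE t β fun f => F (pval f)

lemma expect_congr (h : ∀ p, IsParentMap t p → F p = G p) : expect β t F = expect β t G :=
  sum_congr rfl fun f _ => congrArg (moriP β f * ·) (h _ (isParentMap_pval f))

lemma expect_mono (hβ : 0 < β) (h : ∀ p, IsParentMap t p → F p ≤ G p) :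
    expect β t F ≤ expect β t G :=
  sum_le_sum fun f _ => mul_le_mul_of_nonneg_left (h _ (isParentMap_pval f)) (moriP_nonneg hβ f)

lemma expect_add (β : ℝ) (t : ℕ) (F G : (ℕ → ℕ) → ℝ) :
    expect β t (fun p => F p + G p) = expect β t F + expect β t G := by
  simp only [expect, moriE, mul_add, sum_add_distrib]

lemma expect_const_mul (β : ℝ) (t : ℕ) (c : ℝ) (F : (ℕ → ℕ) → ℝ) :
    expect β t (fun p => c * F p) = c * expect β t F := by
  simp only [expect, moriE, mul_sum, mul_left_comm]

lemma expect_sub (β : ℝ) (t : ℕ) (F G : (ℕ → ℕ) → ℝ) :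
    expect β t (fun p => F p - G p) = expect β t F - expect β t G := by
  simp only [expect, moriE, mul_sub, sum_sub_distrib]

lemma expect_div_const (β : ℝ) (t : ℕ) (F : (ℕ → ℕ) → ℝ) (c : ℝ) :
    expect β t (fun p => F p / c) = expect β t F / c := by
  simp only [expect, moriE, sum_div, mul_div_assoc]

lemma abs_expect_le (hβ : 0 < β) (h : ∀ p, IsParentMap t p → |F p| ≤ G p) :
    |expect β t F| ≤ expect β t G := by
  have hneg : expect β t (fun p => -1 * G p) ≤ expect β t F :=
    expect_mono hβ fun p hp => by linarith [(abs_le.1 (h p hp)).1]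
  rw [expect_const_mul, neg_one_mul] at hneg
  exact abs_le.2 ⟨hneg, expect_mono hβ fun p hp => (abs_le.1 (h p hp)).2⟩

/-- The sum of `φ` over the vertices `v_1,…,v_t`, weighted by the attachment weights
`d_t(v_i) + β`. -/
noncomputable def weightSum (β : ℝ) (t : ℕ) (p : ℕ → ℕ) (φ : ℕ → ℝ) : ℝ :=
  ∑ i ∈ Icc 1 t, (treeDeg p t i + β) * φ i

/-- The sum of `φ` over the heads of the edges, minus its value at the root: summing instead over
all vertices with weight `d_t(v_i) - 1` gives the same, as the root has no outgoing edge. -/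
def headSum (t : ℕ) (p : ℕ → ℕ) (φ : ℕ → ℝ) : ℝ := ∑ j ∈ Icc 2 t, φ (p j) - φ 1

lemma weightSum_add (β : ℝ) (t : ℕ) (p : ℕ → ℕ) (φ ψ : ℕ → ℝ) :
    weightSum β t p (fun i => φ i + ψ i) = weightSum β t p φ + weightSum β t p ψ := by
  simp only [weightSum, mul_add, sum_add_distrib]

lemma weightSum_sub (β : ℝ) (t : ℕ) (p : ℕ → ℕ) (φ ψ : ℕ → ℝ) :
    weightSum β t p (fun i => φ i - ψ i) = weightSum β t p φ - weightSum β t p ψ := by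
  simp only [weightSum, mul_sub, sum_sub_distrib]

lemma weightSum_const_mul (β : ℝ) (t : ℕ) (p : ℕ → ℕ) (c : ℝ) (φ : ℕ → ℝ) :
    weightSum β t p (fun i => c * φ i) = c * weightSum β t p φ := by
  simp only [weightSum, mul_sum, mul_left_comm]

lemma weightSum_mono (hβ : 0 < β) (h : ∀ i ∈ Icc 1 t, φ i ≤ ψ i) :
    weightSum β t p φ ≤ weightSum β t p ψ :=
  sum_le_sum fun i hi => mul_le_mul_of_nonneg_left (h i hi) (by positivity)

lemma weightSum_congr (h : ∀ i ∈ Icc 1 t, φ i = ψ i) : weightSum β t p φ = weightSum β t p ψ :=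
  sum_congr rfl fun i hi => by rw [h i hi]

lemma weightSum_nonneg (hβ : 0 < β) (h : ∀ i ∈ Icc 1 t, 0 ≤ φ i) : 0 ≤ weightSum β t p φ :=
  sum_nonneg fun i hi => mul_nonneg (by positivity) (h i hi)

lemma abs_weightSum_le (hβ : 0 < β) (h : ∀ i ∈ Icc 1 t, |φ i| ≤ ψ i) :
    |weightSum β t p φ| ≤ weightSum β t p ψ :=
  (abs_sum_le_sum_abs _ _).trans <| sum_le_sum fun i hi => by
    rw [abs_mul, abs_of_pos (by positivity)]
    exact mul_le_mul_of_nonneg_left (h i hi) (by positivity)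

lemma headSum_add (t : ℕ) (p : ℕ → ℕ) (φ ψ : ℕ → ℝ) :
    headSum t p (fun i => φ i + ψ i) = headSum t p φ + headSum t p ψ := by
  simp only [headSum, sum_add_distrib]
  ring

lemma headSum_const_mul (t : ℕ) (p : ℕ → ℕ) (c : ℝ) (φ : ℕ → ℝ) :
    headSum t p (fun i => c * φ i) = c * headSum t p φ := by
  simp only [headSum, ← mul_sum, mul_sub]

lemma headSum_update (ht : 1 ≤ t) (p : ℕ → ℕ) (i : ℕ) (φ : ℕ → ℝ) :
    headSum (t + 1) (Function.update p (t + 1) i) φ = headSum t p φ + φ i := by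
  rw [headSum, headSum, sum_update_succ (fun k _ => φ k) ht]
  ring

lemma sum_Icc_one_eq_add {M : Type*} [AddCommMonoid M] (ht : 1 ≤ t) (g : ℕ → M) :
    ∑ j ∈ Icc 1 t, g j = g 1 + ∑ j ∈ Icc 2 t, g j := by
  rw [← add_sum_Ioc_eq_sum_Icc ht]
  rfl

lemma weightSum_eq_headSum_add (ht : 1 ≤ t) (hp : IsParentMap t p) (φ : ℕ → ℝ) :
    weightSum β t p φ = headSum t p φ + (1 + β) * ∑ i ∈ Icc 1 t, φ i := by
  have hin : ∑ i ∈ Icc 1 t, (#{j ∈ Icc 2 t | p j = i} : ℝ) * φ i = ∑ j ∈ Icc 2 t, φ (p j) := by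
    rw [← sum_fiberwise_of_maps_to fun j => hp.parent_mem_Icc (j := j)]
    refine sum_congr rfl fun i _ => ?_
    rw [sum_congr rfl fun j hj => by rw [(mem_filter.1 hj).2], sum_const, nsmul_eq_mul]
  have hout : ∑ i ∈ Icc 1 t, (if 2 ≤ i then 1 else 0) * φ i = ∑ i ∈ Icc 1 t, φ i - φ 1 := by
    rw [sum_Icc_one_eq_add ht, sum_Icc_one_eq_add ht φ, if_neg (by omega), zero_mul, zero_add,
      add_sub_cancel_left]
    exact sum_congr rfl fun i hi => by rw [if_pos (mem_Icc.1 hi).1, one_mul]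
  calc weightSum β t p φ
      = ∑ i ∈ Icc 1 t, (#{j ∈ Icc 2 t | p j = i} : ℝ) * φ i
          + ∑ i ∈ Icc 1 t, (if 2 ≤ i then 1 else 0) * φ i + β * ∑ i ∈ Icc 1 t, φ i := by
        simp only [weightSum, treeDeg, Nat.cast_add, Nat.cast_ite, Nat.cast_one, Nat.cast_zero,
          add_mul, sum_add_distrib, mul_sum]
    _ = headSum t p φ + (1 + β) * ∑ i ∈ Icc 1 t, φ i := by rw [hin, hout, headSum]; ring

lemma weightSum_update (ht : 1 ≤ t) (hp : IsParentMap t p) (hi : i ∈ Icc 1 t) (φ : ℕ → ℝ) :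
    weightSum β (t + 1) (Function.update p (t + 1) i) φ
      = weightSum β t p φ + φ i + (1 + β) * φ (t + 1) := by
  rw [weightSum_eq_headSum_add (by omega) (hp.update hi), weightSum_eq_headSum_add ht hp,
    headSum_update ht, sum_Icc_succ_top (by omega)]
  ring

lemma headSum_const (ht : 1 ≤ t) (p : ℕ → ℕ) (c : ℝ) :
    headSum t p (fun _ => c) = c * (t - 2) := by
  rw [headSum, sum_const, Nat.card_Icc, nsmul_eq_mul, Nat.cast_sub (by omega)]
  push_cast
  ring

lemma weightSum_const (ht : 1 ≤ t) (hp : IsParentMap t p) (c : ℝ) :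
    weightSum β t p (fun _ => c) = c * totalWeight β t := by
  rw [weightSum_eq_headSum_add ht hp, headSum_const ht, sum_const, Nat.card_Icc, nsmul_eq_mul,
    Nat.add_sub_cancel, totalWeight]
  ring

lemma expect_succ_eq_weightSum (ht : 1 ≤ t) (F : (ℕ → ℕ) → ℝ) :
    expect β (t + 1) F = expect β t fun p =>
      weightSum β t p (fun i => F (Function.update p (t + 1) i)) / totalWeight β t := by
  rw [expect, moriE, ← (Equiv.ofBijective _ (attach_bijective ht)).sum_comp,
    Fintype.sum_prod_type]
  refine sum_congr rfl fun f _ => ?_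
  dsimp only
  rw [weightSum, sum_div, mul_sum, sum_subtype (Icc 1 t) (p := (· ∈ Set.Icc 1 t)) (by simp)]
  refine sum_congr rfl fun i _ => ?_
  rw [Equiv.ofBijective_apply, moriP_attach β ht, pval_attach ht]
  ring

lemma expect_succ (hβ : 0 < β) (ht : 1 ≤ t) {A : (ℕ → ℕ) → ℝ} {φ : (ℕ → ℕ) → ℕ → ℝ}
    (h : ∀ p, IsParentMap t p → ∀ i ∈ Icc 1 t, F (Function.update p (t + 1) i) = A p + φ p i) :
    expect β (t + 1) F = expect β t A + expect β t (fun p => weightSum β t p (φ p))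
      / totalWeight β t := by
  rw [expect_succ_eq_weightSum ht, ← expect_div_const, ← expect_add]
  refine expect_congr fun p hp => ?_
  rw [weightSum_congr (h p hp), weightSum_add, weightSum_const ht hp, add_div,
    mul_div_cancel_right₀ _ (totalWeight_pos hβ ht).ne']

lemma expect_one (β : ℝ) (F : (ℕ → ℕ) → ℝ) : expect β 1 F = F fun _ => 0 := by
  have : IsEmpty (Set.Icc 2 1) := by simp
  have : Unique (ParentSeq 1) := by unfold ParentSeq; infer_instance
  have hpval : pval (default : ParentSeq 1) = fun _ => 0 :=
    funext fun j => by rw [pval, dif_neg (by omega)]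
  rw [expect, moriE, Fintype.sum_unique, hpval, moriP, Icc_eq_empty (by omega), prod_empty,
    one_mul]

lemma expect_const (hβ : 0 < β) (ht : 1 ≤ t) (c : ℝ) : expect β t (fun _ => c) = c := by
  induction t, ht using Nat.le_induction with
  | base => rw [expect_one]
  | succ t ht ih =>
    rw [expect_succ hβ ht (A := fun _ => c) (φ := fun _ _ => 0) fun _ _ _ _ => (add_zero c).symm,
      ih]
    simp [weightSum, expect, moriE]

lemma expect_le_of_le_const (hβ : 0 < β) (ht : 1 ≤ t) {c : ℝ}
    (h : ∀ p, IsParentMap t p → F p ≤ c) : expect β t F ≤ c :=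
  (expect_mono hβ h).trans_eq (expect_const hβ ht c)

lemma expect_nonneg (hβ : 0 < β) (h : ∀ p, IsParentMap t p → 0 ≤ F p) : 0 ≤ expect β t F :=
  sum_nonneg fun f _ => mul_nonneg (moriP_nonneg hβ f) (h _ (isParentMap_pval f))

end Expectation

/-! ### Statistics of the merged graph -/

section Statistics

variable {p : ℕ → ℕ} {i j : ℕ} {β : ℝ}

/-- The indicator function of block `a` on tree vertices. -/
def blockInd (m a i : ℕ) : ℝ := if blk m i = a then 1 else 0

/-- The number of edges pointing to the merged vertex `u_a`, decreased by one if `a` is the block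
of the root; this correction makes `blockWeight_eq` uniform in `a`. -/
def inDegree (m t : ℕ) (p : ℕ → ℕ) (a : ℕ) : ℝ := headSum t p (blockInd m a)

/-- The total attachment weight of block `a`. -/
noncomputable def blockWeight (β : ℝ) (m t : ℕ) (p : ℕ → ℕ) (a : ℕ) : ℝ :=
  weightSum β t p (blockInd m a)

/-- The sum over all blocks of the squares of the (corrected) in-degrees, written as a sum over
edges. -/
def sqInDegree (m t : ℕ) (p : ℕ → ℕ) : ℝ := headSum t p fun i => inDegree m t p (blk m i)

/-- The number of edges from block `b` to block `a`. -/
def edgeCount (m t : ℕ) (p : ℕ → ℕ) (a b : ℕ) : ℕ :=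
  #{k ∈ Icc 2 t | blk m (p k) = a ∧ blk m k = b}

/-- The number of loops at the merged vertex `u_a`, where the root counts as carrying a loop. -/
def loopCount (m t : ℕ) (p : ℕ → ℕ) (a : ℕ) : ℕ := edgeCount m t p a a + if a = 1 then 1 else 0

/-- The number of edges to block `a` from blocks strictly between `a` and the block of `v_j`. -/
def betweenCount (m : ℕ) (p : ℕ → ℕ) (j a : ℕ) : ℕ :=
  #{k ∈ Ico 2 j | blk m (p k) = a ∧ a < blk m k ∧ blk m k < blk m j}

/-- The number of pairs of edges from two distinct younger blocks to a common block, each pair being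
counted at its younger edge. -/
def cherryCount (m t : ℕ) (p : ℕ → ℕ) : ℕ := ∑ j ∈ Icc 2 t, betweenCount m p j (blk m (p j))

lemma blockInd_nonneg (m a i : ℕ) : 0 ≤ blockInd m a i := by
  rw [blockInd]; split_ifs <;> norm_num

lemma blockInd_le_one (m a i : ℕ) : blockInd m a i ≤ 1 := by
  rw [blockInd]; split_ifs <;> norm_num

lemma blockInd_self (m i : ℕ) : blockInd m (blk m i) i = 1 := if_pos rfl

lemma blockInd_mul_self (m a i : ℕ) : blockInd m a i * blockInd m a i = blockInd m a i := by
  rw [blockInd]; split_ifs <;> norm_num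

lemma blockInd_comm (m i k : ℕ) : blockInd m (blk m i) k = blockInd m (blk m k) i := by
  simp only [blockInd, eq_comm]

lemma sum_blockInd (m t a : ℕ) : ∑ j ∈ Icc 1 t, blockInd m a j = blockSize m t a :=
  sum_boole _ _

lemma blk_one (m : ℕ) : blk m 1 = 1 := by
  rw [blk, Nat.sub_self, Nat.zero_div]

lemma IsParentMap.blk_parent_le (hp : IsParentMap t p) (hj : j ∈ Icc 2 t) :
    blk m (p j) ≤ blk m j :=
  blk_mono m (mem_Ico.1 (hp j hj)).2.le

lemma inDegree_update (ht : 1 ≤ t) (p : ℕ → ℕ) (i a : ℕ) :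
    inDegree m (t + 1) (Function.update p (t + 1) i) a = inDegree m t p a + blockInd m a i :=
  headSum_update ht p i _

lemma neg_one_le_inDegree (m t : ℕ) (p : ℕ → ℕ) (a : ℕ) : -1 ≤ inDegree m t p a := by
  rw [inDegree, headSum]
  linarith [sum_nonneg fun j (_ : j ∈ Icc 2 t) => blockInd_nonneg m a (p j), blockInd_le_one m a 1]

lemma inDegree_current_le (hm : 0 < m) (hp : IsParentMap t p) :
    inDegree m t p (blk m (t + 1)) ≤ m := by
  set c := blk m (t + 1)
  have parent_current : ∀ j ∈ Icc 2 t, blockInd m c (p j) ≤ blockInd m c j := by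
    intro j hj
    by_cases h : blk m (p j) = c
    · have hle : blk m j ≤ c := blk_mono m ((mem_Icc.1 hj).2.trans t.le_succ)
      rw [blockInd, blockInd, if_pos h, if_pos (hle.antisymm (h ▸ hp.blk_parent_le hj))]
    · rw [blockInd, if_neg h]
      exact blockInd_nonneg m c j
  calc inDegree m t p c
      ≤ ∑ j ∈ Icc 2 t, blockInd m c (p j) := sub_le_self _ (blockInd_nonneg m c 1)
    _ ≤ ∑ j ∈ Icc 2 t, blockInd m c j := sum_le_sum parent_current
    _ ≤ ∑ j ∈ Icc 1 t, blockInd m c j :=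
        sum_le_sum_of_subset_of_nonneg (Icc_subset_Icc_left one_le_two)
          fun j _ _ => blockInd_nonneg m c j
    _ ≤ m := by
        rw [sum_blockInd]
        exact mod_cast blockSize_le hm (one_le_blk m _)

lemma blockWeight_eq (ht : 1 ≤ t) (hp : IsParentMap t p) (a : ℕ) :
    blockWeight β m t p a = inDegree m t p a + (1 + β) * blockSize m t a := by
  rw [blockWeight, weightSum_eq_headSum_add ht hp, sum_blockInd, inDegree]

lemma blockWeight_nonneg (hβ : 0 < β) (m t : ℕ) (p : ℕ → ℕ) (a : ℕ) : 0 ≤ blockWeight β m t p a :=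
  weightSum_nonneg hβ fun i _ => blockInd_nonneg m a i

lemma blockWeight_le_totalWeight (hβ : 0 < β) (ht : 1 ≤ t) (hp : IsParentMap t p) (a : ℕ) :
    blockWeight β m t p a ≤ totalWeight β t := by
  rw [← one_mul (totalWeight β t), ← weightSum_const ht hp]
  exact weightSum_mono hβ fun i _ => blockInd_le_one m a i

lemma blockWeight_current_le (hβ : 0 < β) (hm : 0 < m) (ht : 1 ≤ t) (hp : IsParentMap t p) :
    blockWeight β m t p (blk m (t + 1)) ≤ (2 + β) * m := by
  have hsize : (blockSize m t (blk m (t + 1)) : ℝ) ≤ m :=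
    mod_cast blockSize_le hm (one_le_blk m _)
  rw [blockWeight_eq ht hp]
  linarith [inDegree_current_le hm hp,
    mul_le_mul_of_nonneg_left hsize (by positivity : 0 ≤ 1 + β)]

lemma sqInDegree_update (ht : 1 ≤ t) (p : ℕ → ℕ) (i : ℕ) :
    sqInDegree m (t + 1) (Function.update p (t + 1) i)
      = sqInDegree m t p + 1 + 2 * inDegree m t p (blk m i) := by
  have hold : headSum t p (fun k => inDegree m t p (blk m k) + blockInd m (blk m k) i)
      = sqInDegree m t p + inDegree m t p (blk m i) := by
    rw [headSum_add]
    simp only [blockInd_comm m _ i]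
    rfl
  rw [sqInDegree, headSum_update ht]
  simp only [inDegree_update ht]
  rw [hold, blockInd_self]
  ring

lemma sum_inDegree_blk (m t : ℕ) (p : ℕ → ℕ) :
    ∑ j ∈ Icc 1 t, inDegree m t p (blk m j) = headSum t p fun i => blockSize m t (blk m i) := by
  simp only [inDegree, headSum, sum_sub_distrib, ← sum_blockInd]
  rw [sum_comm]
  simp only [blockInd_comm m]

lemma blockSize_blk (hm : 0 < m) (hi : i ∈ Icc 1 t) :
    (blockSize m t (blk m i) : ℝ)
      = m + ((t % m : ℕ) - m) * blockInd m (blk m (t + 1)) i := by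
  by_cases h : blk m i = blk m (t + 1)
  · rw [blockInd, if_pos h, h, blockSize_current hm]
    ring
  · have hlt : blk m i < blk m (t + 1) :=
      lt_of_le_of_ne (blk_mono m ((mem_Icc.1 hi).2.trans t.le_succ)) h
    rw [blockInd, if_neg h, blockSize_of_lt_current hm (one_le_blk m i) hlt]
    ring

lemma weightSum_inDegree (hm : 0 < m) (ht : 1 ≤ t) (hp : IsParentMap t p) :
    weightSum β t p (fun i => inDegree m t p (blk m i))
      = sqInDegree m t p
        + (1 + β) * (m * (t - 2) + ((t % m : ℕ) - m) * inDegree m t p (blk m (t + 1))) := by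
  have hsize : (headSum t p fun i => (blockSize m t (blk m i) : ℝ))
      = headSum t p fun i => m + ((t % m : ℕ) - m) * blockInd m (blk m (t + 1)) i :=
    congrArg₂ (· - ·) (sum_congr rfl fun j hj => blockSize_blk hm (hp.parent_mem_Icc hj))
      (blockSize_blk hm (mem_Icc.2 ⟨le_rfl, ht⟩))
  rw [weightSum_eq_headSum_add ht hp, sum_inDegree_blk, hsize, headSum_add, headSum_const ht,
    headSum_const_mul]
  rfl

lemma weightSum_blockWeight_le (hβ : 0 < β) (hm : 0 < m) (ht : 1 ≤ t) (hp : IsParentMap t p) :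
    weightSum β t p (fun i => blockWeight β m t p (blk m i))
      ≤ sqInDegree m t p + (1 + β) * m * (t + totalWeight β t) := by
  have hsize : weightSum β t p (fun i => (blockSize m t (blk m i) : ℝ)) ≤ m * totalWeight β t := by
    rw [← weightSum_const ht hp]
    exact weightSum_mono hβ fun i _ => mod_cast blockSize_le hm (one_le_blk m _)
  have hmod : ((t % m : ℕ) : ℝ) ≤ m := mod_cast (Nat.mod_lt t hm).le
  have hcurrent : ((t % m : ℕ) - m) * inDegree m t p (blk m (t + 1)) ≤ m := by
    nlinarith [neg_one_le_inDegree m t p (blk m (t + 1)), (Nat.cast_nonneg (t % m) : (0 : ℝ) ≤ _)]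
  simp only [blockWeight_eq ht hp]
  rw [weightSum_add, weightSum_const_mul, weightSum_inDegree hm ht hp]
  have hmul := mul_le_mul_of_nonneg_left (add_le_add hcurrent hsize) (by positivity : 0 ≤ 1 + β)
  linarith [hmul, (by positivity : 0 ≤ (1 + β) * m)]

lemma edgeCount_update (ht : 1 ≤ t) (p : ℕ → ℕ) (i a b : ℕ) :
    edgeCount m (t + 1) (Function.update p (t + 1) i) a b
      = edgeCount m t p a b + if blk m i = a ∧ blk m (t + 1) = b then 1 else 0 := by
  simp only [edgeCount, card_filter]
  exact sum_update_succ (fun k j => if blk m k = a ∧ blk m j = b then 1 else 0) ht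

lemma edgeCount_update_current (ht : 1 ≤ t) (p : ℕ → ℕ) (i k : ℕ) :
    (edgeCount m (t + 1) (Function.update p (t + 1) i) (blk m k) (blk m (t + 1)) : ℝ)
      = edgeCount m t p (blk m k) (blk m (t + 1)) + blockInd m (blk m i) k := by
  simp only [edgeCount_update ht, blockInd, and_true, eq_comm, Nat.cast_add, Nat.cast_ite,
    Nat.cast_one, Nat.cast_zero]

lemma edgeCount_le_blockSize (m t : ℕ) (p : ℕ → ℕ) (a b : ℕ) :
    edgeCount m t p a b ≤ blockSize m t b :=
  card_le_card fun j hj => by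
    rw [mem_filter, mem_Icc] at hj ⊢
    exact ⟨⟨one_le_two.trans hj.1.1, hj.1.2⟩, hj.2.2⟩

lemma loopCount_update (ht : 1 ≤ t) (p : ℕ → ℕ) (i k : ℕ) :
    (loopCount m (t + 1) (Function.update p (t + 1) i) (blk m k) : ℝ)
      = loopCount m t p (blk m k)
        + blockInd m (blk m (t + 1)) i * blockInd m (blk m (t + 1)) k := by
  have hind : ((if blk m i = blk m k ∧ blk m (t + 1) = blk m k then 1 else 0 : ℕ) : ℝ)
      = blockInd m (blk m (t + 1)) i * blockInd m (blk m (t + 1)) k := by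
    simp only [blockInd]
    split_ifs <;> grind
  rw [loopCount, edgeCount_update ht, ← hind, loopCount]
  push_cast
  ring

lemma weightSum_loopCount_update (ht : 1 ≤ t) (hp : IsParentMap t p) (hi : i ∈ Icc 1 t) :
    weightSum β (t + 1) (Function.update p (t + 1) i)
        (fun k => loopCount m (t + 1) (Function.update p (t + 1) i) (blk m k))
      = weightSum β t p (fun k => loopCount m t p (blk m k))
        + (1 + β) * loopCount m t p (blk m (t + 1))
        + (loopCount m t p (blk m i)
          + (blockWeight β m t p (blk m (t + 1)) + (2 + β)) * blockInd m (blk m (t + 1)) i) := by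
  rw [weightSum_update ht hp hi]
  simp only [loopCount_update ht]
  rw [weightSum_add, weightSum_const_mul, blockInd_self, blockInd_mul_self, blockWeight]
  ring

lemma weightSum_edgeCount_update (ht : 1 ≤ t) (hp : IsParentMap t p) (hi : i ∈ Icc 1 t) :
    weightSum β (t + 1) (Function.update p (t + 1) i)
        (fun k => edgeCount m (t + 1) (Function.update p (t + 1) i) (blk m k) (blk m (t + 1)))
      = weightSum β t p (fun k => edgeCount m t p (blk m k) (blk m (t + 1)))
        + (1 + β) * edgeCount m t p (blk m (t + 1)) (blk m (t + 1))
        + (blockWeight β m t p (blk m i) + edgeCount m t p (blk m i) (blk m (t + 1)) + 1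
          + (1 + β) * blockInd m (blk m (t + 1)) i) := by
  rw [weightSum_update ht hp hi]
  simp only [edgeCount_update_current ht]
  rw [weightSum_add, blockInd_self, blockInd_comm m i, blockWeight]
  ring

lemma weightSum_edgeCount_current_le (hβ : 0 < β) (hm : 0 < m) (ht : 1 ≤ t)
    (hp : IsParentMap t p) :
    weightSum β t p (fun k => edgeCount m t p (blk m k) (blk m (t + 1)))
      ≤ (t % m : ℕ) * totalWeight β t := by
  rw [← weightSum_const ht hp, ← blockSize_current hm]
  exact weightSum_mono hβ fun k _ => mod_cast edgeCount_le_blockSize m t p _ _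

lemma loopCount_le_blockSize (ht : 1 ≤ t) (m : ℕ) (p : ℕ → ℕ) (a : ℕ) :
    loopCount m t p a ≤ blockSize m t a := by
  rw [loopCount, blockSize, edgeCount, card_filter, card_filter, sum_Icc_one_eq_add ht, blk_one,
    add_comm]
  refine add_le_add (by simp only [eq_comm, le_refl]) (sum_le_sum fun j _ => ?_)
  split_ifs <;> omega

lemma cherryCount_update (ht : 1 ≤ t) (p : ℕ → ℕ) (i : ℕ) :
    cherryCount m (t + 1) (Function.update p (t + 1) i)
      = cherryCount m t p + betweenCount m p (t + 1) (blk m i) := by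
  have hpast : ∀ j ≤ t + 1, ∀ a,
      betweenCount m (Function.update p (t + 1) i) j a = betweenCount m p j a := by
    intro j hj a
    refine congrArg card (filter_congr fun k hk => ?_)
    rw [Function.update_of_ne ((mem_Ico.1 hk).2.trans_le hj).ne]
  rw [cherryCount, sum_update_succ (fun k j => betweenCount m _ j (blk m k)) ht, hpast _ le_rfl]
  congr 1
  exact sum_congr rfl fun j hj => hpast j ((mem_Icc.1 hj).2.trans t.le_succ) _

lemma abs_betweenCount_sub_inDegree_le (hp : IsParentMap t p) (a : ℕ) :
    |(betweenCount m p (t + 1) a : ℝ) - inDegree m t p a|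
      ≤ loopCount m t p a + edgeCount m t p a (blk m (t + 1)) := by
  set D := #{k ∈ Icc 2 t | blk m (p k) = a}
  have hIco : Ico 2 (t + 1) = Icc 2 t := Ico_succ_right_eq_Icc 2 t
  have hdegree : inDegree m t p a = D - (if a = 1 then 1 else 0 : ℕ) := by
    rw [inDegree, headSum, blockInd, blk_one]
    simp only [blockInd, sum_boole, eq_comm, Nat.cast_ite, Nat.cast_one, Nat.cast_zero, D]
  have hle : betweenCount m p (t + 1) a ≤ D := by
    rw [betweenCount, hIco]
    exact card_le_card (monotone_filter_right _ fun k _ hk => hk.1)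
  have hge : D ≤ betweenCount m p (t + 1) a + edgeCount m t p a a
      + edgeCount m t p a (blk m (t + 1)) := by
    rw [betweenCount, hIco]
    refine (card_le_card fun k hkD => ?_).trans
      ((card_union_le _ _).trans (Nat.add_le_add_right (card_union_le _ _) _))
    obtain ⟨hk, rfl⟩ := mem_filter.1 hkD
    have hfrom := hp.blk_parent_le (m := m) hk
    have hto : blk m k ≤ blk m (t + 1) := blk_mono m ((mem_Icc.1 hk).2.trans t.le_succ)
    simp only [mem_union, mem_filter, hk, true_and]
    omega
  have hle' : (betweenCount m p (t + 1) a : ℝ) ≤ D := mod_cast hle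
  have hge' : (D : ℝ) ≤ betweenCount m p (t + 1) a + edgeCount m t p a a
      + edgeCount m t p a (blk m (t + 1)) := mod_cast hge
  rw [hdegree, loopCount, Nat.cast_add, abs_le]
  have hloop := Nat.cast_nonneg (α := ℝ) (if a = 1 then 1 else 0)
  have hedge := Nat.cast_nonneg (α := ℝ) (edgeCount m t p a a)
  have hcurrent := Nat.cast_nonneg (α := ℝ) (edgeCount m t p a (blk m (t + 1)))
  constructor <;> linarith [hloop, hedge, hcurrent]

end Statistics

/-! ### Growth of expectations -/

section Moments

variable {β : ℝ}

/-- The growth rate of `sqInDegree` per unit of `totalWeight`, the fixed point of the recursion for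
its expectation. -/
noncomputable def sqInDegreeRate (β : ℝ) (m : ℕ) : ℝ := (1 + 2 * m * (1 + β) / (2 + β)) / β

lemma sqInDegreeRate_nonneg (hβ : 0 < β) (m : ℕ) : 0 ≤ sqInDegreeRate β m := by
  unfold sqInDegreeRate
  positivity

lemma expect_sqInDegree_succ (hβ : 0 < β) (hm : 0 < m) (ht : 1 ≤ t) :
    expect β (t + 1) (sqInDegree m (t + 1)) - sqInDegreeRate β m * totalWeight β (t + 1)
      = (expect β t (sqInDegree m t) - sqInDegreeRate β m * totalWeight β t)
          * (1 + 2 / totalWeight β t)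
        + 2 * (1 + β) * (((t % m : ℕ) - m)
            * expect β t (fun p => inDegree m t p (blk m (t + 1))) - 2 * m * (1 + β) / (2 + β))
          / totalWeight β t := by
  have hS := (totalWeight_pos hβ ht).ne'
  have hβ₂ : 2 + β ≠ 0 := by positivity
  have hweight : expect β t (fun p => weightSum β t p fun i => 2 * inDegree m t p (blk m i))
      = 2 * (expect β t (sqInDegree m t) + (1 + β) * (m * (t - 2)
        + ((t % m : ℕ) - m) * expect β t (fun p => inDegree m t p (blk m (t + 1))))) := by
    simp only [weightSum_const_mul, expect_const_mul]
    rw [expect_congr fun p hp => weightSum_inDegree hm ht hp, expect_add, expect_const_mul,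
      expect_add, expect_const hβ ht, expect_const_mul]
  have htime : (t : ℝ) - 2 = (totalWeight β t - 2 * (1 + β)) / (2 + β) := by
    rw [totalWeight]; field_simp; ring
  rw [expect_succ hβ ht fun p _ i _ => sqInDegree_update ht p i, hweight, expect_add,
    expect_const hβ ht, htime, totalWeight_succ, sqInDegreeRate]
  field_simp
  ring

lemma exists_abs_expect_sqInDegree_sub_le (hβ : 0 < β) (hm : 0 < m) :
    ∃ K : ℝ, 0 ≤ K ∧ ∀ t : ℕ, 1 ≤ t →
      |expect β t (sqInDegree m t) - sqInDegreeRate β m * totalWeight β t|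
        ≤ K * (t : ℝ) ^ (2 / (2 + β)) := by
  set x : ℕ → ℝ :=
    fun t => expect β t (sqInDegree m t) - sqInDegreeRate β m * totalWeight β t
  set C : ℝ := 2 * (1 + β) * (m * m + 2 * m * (1 + β) / (2 + β))
  have hC : 0 ≤ C := by positivity
  have h_step : ∀ t, 1 ≤ t →
      |x (t + 1)| ≤ |x t| * (1 + 2 / totalWeight β t) + C / totalWeight β t := by
    intro t ht
    have hS := totalWeight_pos hβ ht
    have hmod : |((t % m : ℕ) : ℝ) - m| ≤ m := by
      have hlt : ((t % m : ℕ) : ℝ) ≤ m := mod_cast (Nat.mod_lt t hm).le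
      rw [abs_of_nonpos (sub_nonpos.2 hlt), neg_sub]
      exact sub_le_self _ (Nat.cast_nonneg _)
    have hdeg : |expect β t (fun p => inDegree m t p (blk m (t + 1)))| ≤ m := by
      refine (abs_expect_le hβ fun p hp => abs_le.2 ⟨?_, inDegree_current_le hm hp⟩).trans_eq
        (expect_const hβ ht _)
      exact (neg_le_neg (mod_cast hm)).trans (neg_one_le_inDegree m t p _)
    simp only [x]
    rw [expect_sqInDegree_succ hβ hm ht]
    refine (abs_add_le _ _).trans (add_le_add ?_ ?_)
    · rw [abs_mul, abs_of_pos (by positivity : 0 < 1 + 2 / totalWeight β t)]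
    · rw [abs_div, abs_of_pos hS, abs_mul, abs_of_pos (by positivity : 0 < 2 * (1 + β))]
      simp only [C]
      gcongr
      refine le_trans (abs_sub _ _) (add_le_add ?_ ?_)
      · rw [abs_mul]
        exact mul_le_mul hmod hdeg (abs_nonneg _) (Nat.cast_nonneg _)
      · rw [abs_of_nonneg (by positivity)]
  exact ⟨_, by positivity, fun t ht =>
    le_rpow_of_le_mul_add_div hβ hC (abs_nonneg (x 1)) (x := fun t => |x t|) le_rfl h_step ht⟩

lemma rpow_le_totalWeight_div (hβ : 0 < β) (ht : 1 ≤ t) :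
    (t : ℝ) ^ (2 / (2 + β)) ≤ totalWeight β t / β := by
  have hexp : 2 / (2 + β) ≤ 1 := div_le_one_of_le₀ (by linarith) (by positivity)
  have hpow := Real.rpow_le_rpow_of_exponent_le (mod_cast ht : (1 : ℝ) ≤ t) hexp
  rw [Real.rpow_one] at hpow
  exact hpow.trans ((le_div_iff₀' hβ).2 (mul_le_totalWeight β ht))

lemma exists_expect_weightSum_blockWeight_le (hβ : 0 < β) (hm : 0 < m) :
    ∃ C : ℝ, 0 ≤ C ∧ ∀ t, 1 ≤ t →
      expect β t (fun p => weightSum β t p fun i => blockWeight β m t p (blk m i))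
        ≤ C * totalWeight β t := by
  obtain ⟨K, hK, hsq⟩ := exists_abs_expect_sqInDegree_sub_le hβ hm
  have hrate := sqInDegreeRate_nonneg hβ m
  refine ⟨sqInDegreeRate β m + K / β + (1 + β) * m * (1 / β + 1), by positivity, fun t ht => ?_⟩
  have htime : (t : ℝ) ≤ totalWeight β t / β := (le_div_iff₀' hβ).2 (mul_le_totalWeight β ht)
  calc expect β t (fun p => weightSum β t p fun i => blockWeight β m t p (blk m i))
      ≤ expect β t (fun p => sqInDegree m t p + (1 + β) * m * (t + totalWeight β t)) :=
        expect_mono hβ fun p hp => weightSum_blockWeight_le hβ hm ht hp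
    _ = expect β t (sqInDegree m t) + (1 + β) * m * (t + totalWeight β t) := by
        rw [expect_add, expect_const hβ ht]
    _ ≤ sqInDegreeRate β m * totalWeight β t + K * (totalWeight β t / β)
          + (1 + β) * m * (totalWeight β t / β + totalWeight β t) := by
        gcongr
        refine (sub_le_iff_le_add'.1 ((le_abs_self _).trans (hsq t ht))).trans ?_
        gcongr
        exact rpow_le_totalWeight_div hβ ht
    _ = _ := by ring

lemma expect_loopCount_current_succ (hβ : 0 < β) (ht : 1 ≤ t) (h : (t + 1) % m ≠ 0) :
    expect β (t + 1) (fun p => loopCount m (t + 1) p (blk m (t + 1 + 1)))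
      = expect β t (fun p => loopCount m t p (blk m (t + 1)))
        + expect β t (fun p => blockWeight β m t p (blk m (t + 1))) / totalWeight β t := by
  rw [blk_succ_of_mod_ne_zero h]
  refine expect_succ hβ ht (φ := fun _ => blockInd m (blk m (t + 1))) fun p _ i _ => ?_
  rw [loopCount_update ht, blockInd_self, mul_one]

lemma expect_loopCount_current_le_mod (hβ : 0 < β) (hm : 0 < m) (ht : 1 ≤ t) :
    expect β t (fun p => loopCount m t p (blk m (t + 1))) ≤ (t % m : ℕ) :=
  expect_le_of_le_const hβ ht fun p _ => by
    rw [← blockSize_current hm]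
    exact mod_cast loopCount_le_blockSize ht m p _

lemma exists_expect_loopCount_current_le (hβ : 0 < β) (hm : 0 < m) :
    ∃ C : ℝ, 0 ≤ C ∧ ∀ t, 1 ≤ t →
      expect β t (fun p => loopCount m t p (blk m (t + 1))) ≤ C / totalWeight β t := by
  set x : ℕ → ℝ := fun t => expect β t fun p => loopCount m t p (blk m (t + 1))
  set w : ℝ := (2 + β) * m
  set B : ℝ := w + (2 + β) * (m + w / β)
  have hx : ∀ t, 1 ≤ t → x t ≤ m := fun t ht =>
    (expect_loopCount_current_le_mod hβ hm ht).trans (mod_cast (Nat.mod_lt t hm).le)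
  have h_one : totalWeight β 1 * x 1 ≤ B := by
    have hmul := mul_le_mul_of_nonneg_left (hx 1 le_rfl) hβ.le
    have hw : 0 ≤ w + (2 + β) * (w / β) + 2 * m := by positivity
    rw [totalWeight_one]
    simp only [B]
    linarith
  have h_reset : ∀ t, 1 ≤ t → t % m = 0 → totalWeight β t * x t ≤ 0 := fun t ht h =>
    mul_nonpos_of_nonneg_of_nonpos (totalWeight_pos hβ ht).le
      ((expect_loopCount_current_le_mod hβ hm ht).trans_eq (by rw [h, Nat.cast_zero]))
  have h_step : ∀ t, 1 ≤ t → (t + 1) % m ≠ 0 →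
      totalWeight β (t + 1) * x (t + 1) ≤ totalWeight β t * x t + B := by
    intro t ht h
    have hS := totalWeight_pos hβ ht
    have hW : expect β t (fun p => blockWeight β m t p (blk m (t + 1))) ≤ w :=
      expect_le_of_le_const hβ ht fun p hp => blockWeight_current_le hβ hm ht hp
    set W := expect β t fun p => blockWeight β m t p (blk m (t + 1))
    have hw : 0 ≤ w := by positivity
    have hdiv : W / totalWeight β t ≤ w / β := div_le_div₀ hw hW hβ (le_totalWeight hβ ht)
    calc totalWeight β (t + 1) * x (t + 1)
        = totalWeight β t * x t + (W + (2 + β) * (x t + W / totalWeight β t)) := by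
          simp only [x, W]
          rw [expect_loopCount_current_succ hβ ht h, totalWeight_succ]
          field_simp
          ring
      _ ≤ totalWeight β t * x t + (w + (2 + β) * (m + w / β)) := by
          have := hx t ht
          gcongr
  exact ⟨B * m, by positivity, fun t ht => (le_div_iff₀' (totalWeight_pos hβ ht)).2 <|
    le_mul_of_reset_of_step hm (by positivity) h_one h_reset h_step ht⟩

lemma expect_weightSum_loopCount_succ (hβ : 0 < β) (ht : 1 ≤ t) :
    expect β (t + 1) (fun p => weightSum β (t + 1) p fun i => loopCount m (t + 1) p (blk m i))
      = expect β t (fun p => weightSum β t p fun i => loopCount m t p (blk m i))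
        + (1 + β) * expect β t (fun p => loopCount m t p (blk m (t + 1)))
        + (expect β t (fun p => weightSum β t p fun i => loopCount m t p (blk m i))
          + expect β t (fun p => (blockWeight β m t p (blk m (t + 1)) + (2 + β))
            * blockWeight β m t p (blk m (t + 1)))) / totalWeight β t := by
  rw [expect_succ hβ ht fun p hp i hi => weightSum_loopCount_update ht hp hi]
  simp only [weightSum_add, weightSum_const_mul, expect_add, expect_const_mul]
  rfl

lemma exists_expect_weightSum_loopCount_le (hβ : 0 < β) (hm : 0 < m) :
    ∃ K : ℝ, 0 ≤ K ∧ ∀ t : ℕ, 1 ≤ t →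
      expect β t (fun p => weightSum β t p fun i => loopCount m t p (blk m i))
        ≤ K * (t : ℝ) ^ (2 / (2 + β)) := by
  obtain ⟨C, hC, hloop⟩ := exists_expect_loopCount_current_le hβ hm
  set x : ℕ → ℝ := fun t => expect β t fun p => weightSum β t p fun i => loopCount m t p (blk m i)
  set w : ℝ := (2 + β) * m
  have hx : ∀ t, 0 ≤ x t := fun t =>
    expect_nonneg hβ fun p _ => weightSum_nonneg hβ fun i _ => Nat.cast_nonneg _
  have h_step : ∀ t, 1 ≤ t → x (t + 1) ≤ x t * (1 + 2 / totalWeight β t)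
      + ((1 + β) * C + (w + (2 + β)) * w) / totalWeight β t := by
    intro t ht
    have hS := totalWeight_pos hβ ht
    set W : (ℕ → ℕ) → ℝ := fun p => blockWeight β m t p (blk m (t + 1))
    have hW : expect β t (fun p => (W p + (2 + β)) * W p) ≤ (w + (2 + β)) * w :=
      expect_le_of_le_const hβ ht fun p hp => by
        have hWp : W p ≤ w := blockWeight_current_le hβ hm ht hp
        have hWp₀ : 0 ≤ W p := blockWeight_nonneg hβ m t p _
        gcongr
    calc x (t + 1)
        = x t + (1 + β) * expect β t (fun p => loopCount m t p (blk m (t + 1)))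
          + (x t + expect β t (fun p => (W p + (2 + β)) * W p)) / totalWeight β t :=
          expect_weightSum_loopCount_succ hβ ht
      _ ≤ x t + (1 + β) * (C / totalWeight β t)
          + (2 * x t + (w + (2 + β)) * w) / totalWeight β t := by
          gcongr
          · exact hloop t ht
          · exact le_mul_of_one_le_left (hx t) one_le_two
      _ = _ := by ring
  have hx₁ := hx 1
  exact ⟨_, by positivity, fun t ht => le_rpow_of_le_mul_add_div hβ (by positivity) hx₁ le_rfl
    h_step ht⟩

lemma expect_weightSum_edgeCount_current_succ (hβ : 0 < β) (ht : 1 ≤ t) (h : (t + 1) % m ≠ 0) :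
    expect β (t + 1) (fun p => weightSum β (t + 1) p fun i =>
        edgeCount m (t + 1) p (blk m i) (blk m (t + 1 + 1)))
      = expect β t (fun p => weightSum β t p fun i => edgeCount m t p (blk m i) (blk m (t + 1)))
        + (1 + β) * expect β t (fun p => edgeCount m t p (blk m (t + 1)) (blk m (t + 1)))
        + (expect β t (fun p => weightSum β t p fun i => blockWeight β m t p (blk m i))
          + expect β t (fun p => weightSum β t p fun i =>
            edgeCount m t p (blk m i) (blk m (t + 1)))
          + totalWeight β t
          + (1 + β) * expect β t (fun p => blockWeight β m t p (blk m (t + 1))))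
            / totalWeight β t := by
  rw [blk_succ_of_mod_ne_zero h,
    expect_succ hβ ht fun p hp i hi => weightSum_edgeCount_update ht hp hi]
  simp only [weightSum_add, weightSum_const_mul, expect_add, expect_const_mul]
  rw [expect_congr fun p hp => weightSum_const ht hp 1, expect_const hβ ht, one_mul]
  rfl

lemma expect_weightSum_edgeCount_current_le_mod (hβ : 0 < β) (hm : 0 < m) (ht : 1 ≤ t) :
    expect β t (fun p => weightSum β t p fun i => edgeCount m t p (blk m i) (blk m (t + 1)))
      ≤ (t % m : ℕ) * totalWeight β t :=
  expect_le_of_le_const hβ ht fun _ hp => weightSum_edgeCount_current_le hβ hm ht hp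

lemma exists_expect_weightSum_edgeCount_current_le (hβ : 0 < β) (hm : 0 < m) :
    ∃ C : ℝ, 0 ≤ C ∧ ∀ t : ℕ, 1 ≤ t →
      expect β t (fun p => weightSum β t p fun i => edgeCount m t p (blk m i) (blk m (t + 1)))
        ≤ C := by
  obtain ⟨D, hD, hweight⟩ := exists_expect_weightSum_blockWeight_le hβ hm
  set x : ℕ → ℝ := fun t =>
    expect β t fun p => weightSum β t p fun i => edgeCount m t p (blk m i) (blk m (t + 1))
  set B : ℝ := (1 + β) * m + (D + m + 1 + (1 + β))
  have hx : ∀ t, 1 ≤ t → x t ≤ m * totalWeight β t := fun t ht =>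
    (expect_weightSum_edgeCount_current_le_mod hβ hm ht).trans
      (mul_le_mul_of_nonneg_right (mod_cast (Nat.mod_lt t hm).le) (totalWeight_pos hβ ht).le)
  have h_one : x 1 ≤ B := by
    have hx₁ := hx 1 le_rfl
    rw [totalWeight_one] at hx₁
    have hrest : 0 ≤ m + (D + m + 1 + (1 + β)) := by positivity
    simp only [B]
    linarith [hx₁, hrest]
  have h_reset : ∀ t, 1 ≤ t → t % m = 0 → x t ≤ 0 := fun t ht h =>
    (expect_weightSum_edgeCount_current_le_mod hβ hm ht).trans_eq
      (by rw [h, Nat.cast_zero, zero_mul])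
  have h_step : ∀ t, 1 ≤ t → (t + 1) % m ≠ 0 → x (t + 1) ≤ x t + B := by
    intro t ht h
    have hS := totalWeight_pos hβ ht
    set W : (ℕ → ℕ) → ℝ := fun p => blockWeight β m t p (blk m (t + 1))
    set y : (ℕ → ℕ) → ℝ := fun p => edgeCount m t p (blk m (t + 1)) (blk m (t + 1))
    have hW : expect β t W ≤ totalWeight β t :=
      expect_le_of_le_const hβ ht fun p hp => blockWeight_le_totalWeight hβ ht hp _
    have hy : expect β t y ≤ m := expect_le_of_le_const hβ ht fun p _ =>
      Nat.cast_le.2 <| (edgeCount_le_blockSize m t p _ _).trans (blockSize_le hm (one_le_blk m _))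
    calc x (t + 1)
        = x t + (1 + β) * expect β t y
          + (expect β t (fun p => weightSum β t p fun i => blockWeight β m t p (blk m i)) + x t
            + totalWeight β t + (1 + β) * expect β t W) / totalWeight β t :=
          expect_weightSum_edgeCount_current_succ hβ ht h
      _ ≤ x t + (1 + β) * m + (D * totalWeight β t + m * totalWeight β t
          + totalWeight β t + (1 + β) * totalWeight β t) / totalWeight β t := by
          have := hweight t ht
          have := hx t ht
          gcongr
      _ = x t + B := by simp only [B]; field_simp; ring
  exact ⟨B * m, by positivity, fun t ht =>
    le_mul_of_reset_of_step hm (by positivity) h_one h_reset h_step ht⟩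

lemma expect_cherryCount_sub_sqInDegree_succ (hβ : 0 < β) (ht : 1 ≤ t) :
    2 * expect β (t + 1) (fun p => cherryCount m (t + 1) p)
        - expect β (t + 1) (sqInDegree m (t + 1)) + (t + 1 : ℕ)
      = 2 * expect β t (fun p => cherryCount m t p) - expect β t (sqInDegree m t) + t
        + 2 * expect β t (fun p => weightSum β t p fun i =>
            betweenCount m p (t + 1) (blk m i) - inDegree m t p (blk m i)) / totalWeight β t := by
  rw [expect_succ hβ ht fun p _ i _ => by rw [cherryCount_update ht p i, Nat.cast_add],
    expect_succ hβ ht fun p _ i _ => sqInDegree_update ht p i, expect_add, expect_const hβ ht]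
  simp only [weightSum_sub, expect_sub, weightSum_const_mul, expect_const_mul, Nat.cast_add_one]
  ring

lemma exists_abs_expect_cherryCount_sub_sqInDegree_le (hβ : 0 < β) (hm : 0 < m) :
    ∃ K : ℝ, 0 ≤ K ∧ ∀ t : ℕ, 1 ≤ t →
      |2 * expect β t (fun p => cherryCount m t p) - expect β t (sqInDegree m t) + t|
        ≤ K * (t : ℝ) ^ (2 / (2 + β)) := by
  obtain ⟨K, hK, hloop⟩ := exists_expect_weightSum_loopCount_le hβ hm
  obtain ⟨C, hC, hedge⟩ := exists_expect_weightSum_edgeCount_current_le hβ hm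
  set x : ℕ → ℝ := fun t =>
    2 * expect β t (fun p => cherryCount m t p) - expect β t (sqInDegree m t) + t
  have h_step : ∀ t : ℕ, 1 ≤ t →
      |x (t + 1)| ≤ |x t| + 2 * (K + C) * (t : ℝ) ^ (2 / (2 + β)) / totalWeight β t := by
    intro t ht
    have hS := totalWeight_pos hβ ht
    set δ : (ℕ → ℕ) → ℝ := fun p =>
      weightSum β t p fun i => betweenCount m p (t + 1) (blk m i) - inDegree m t p (blk m i)
    have hδ : |expect β t δ| ≤ (K + C) * (t : ℝ) ^ (2 / (2 + β)) :=
      calc |expect β t δ|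
          ≤ expect β t (fun p => (weightSum β t p fun i => loopCount m t p (blk m i))
              + weightSum β t p fun i => edgeCount m t p (blk m i) (blk m (t + 1))) := by
            refine abs_expect_le hβ fun p hp => ?_
            rw [← weightSum_add]
            exact abs_weightSum_le hβ fun i _ => abs_betweenCount_sub_inDegree_le hp _
        _ ≤ K * (t : ℝ) ^ (2 / (2 + β)) + C * (t : ℝ) ^ (2 / (2 + β)) := by
            rw [expect_add]
            exact add_le_add (hloop t ht) ((hedge t ht).trans
              (le_mul_of_one_le_right hC (Real.one_le_rpow (mod_cast ht) (by positivity))))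
        _ = _ := by ring
    simp only [x]
    rw [expect_cherryCount_sub_sqInDegree_succ hβ ht, mul_assoc]
    refine (abs_add_le _ _).trans (add_le_add_right ?_ _)
    rw [abs_div, abs_mul, abs_two, abs_of_pos hS]
    gcongr
  exact ⟨_, by positivity, fun t ht => le_rpow_of_le_add_rpow_div hβ (by positivity)
    (abs_nonneg (x 1)) (x := fun t => |x t|) le_rfl h_step ht⟩

lemma exists_abs_expect_cherryCount_sub_le (hβ : 0 < β) (hm : 0 < m) :
    ∃ K : ℝ, 0 < K ∧ ∀ t : ℕ, 1 ≤ t →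
      |expect β t (fun p => cherryCount m t p) - (1 + m * (1 + β)) / β * t|
        ≤ K * (t : ℝ) ^ (2 / (2 + β)) := by
  obtain ⟨K₁, hK₁, hcherry⟩ := exists_abs_expect_cherryCount_sub_sqInDegree_le hβ hm
  obtain ⟨K₂, hK₂, hsq⟩ := exists_abs_expect_sqInDegree_sub_le hβ hm
  have hrate := sqInDegreeRate_nonneg hβ m
  refine ⟨K₁ + K₂ + sqInDegreeRate β m + 1, by positivity, fun t ht => ?_⟩
  have hpow : 1 ≤ (t : ℝ) ^ (2 / (2 + β)) := Real.one_le_rpow (mod_cast ht) (by positivity)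
  have hlinear : 2 * ((1 + m * (1 + β)) / β * t) + t
      = sqInDegreeRate β m * totalWeight β t + 2 * sqInDegreeRate β m := by
    rw [sqInDegreeRate, totalWeight]; field_simp; ring
  have h₁ := abs_le.1 (hcherry t ht)
  have h₂ := abs_le.1 (hsq t ht)
  have hmul := mul_le_mul_of_nonneg_left hpow hrate
  rw [abs_le]
  constructor <;> linarith

end Moments

/-! ### Edge multiplicities -/

section Multiplicities

variable {p : ℕ → ℕ} {n : ℕ}

lemma mult_eq_edgeCount (f : ParentSeq (n * m)) {a b : ℕ} (hab : a < b) :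
    mult n m f a b = edgeCount m (n * m) (pval f) a b := by
  refine congrArg card (filter_congr fun k hk => ?_)
  have hle := (isParentMap_pval f).blk_parent_le (m := m) hk
  omega

lemma betweenCount_eq_sum_edgeCount {j : ℕ} (hj : j ≤ t) (p : ℕ → ℕ) (a : ℕ) :
    betweenCount m p j a = ∑ b ∈ Ioo a (blk m j), edgeCount m t p a b := by
  have hfilter : {k ∈ Ico 2 j | blk m (p k) = a ∧ a < blk m k ∧ blk m k < blk m j}
      = {k ∈ Icc 2 t | blk m (p k) = a ∧ blk m k ∈ Ioo a (blk m j)} := by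
    ext k
    have hlt : blk m k < blk m j → k < j := (blk_mono m).reflect_lt
    simp only [mem_filter, mem_Ico, mem_Icc, mem_Ioo]
    grind
  rw [betweenCount, hfilter, card_eq_sum_card_fiberwise (f := blk m) (t := Ioo a (blk m j))
    fun k hk => (mem_filter.1 hk).2.2]
  refine sum_congr rfl fun b hb => ?_
  rw [filter_filter, edgeCount]
  exact congrArg card (filter_congr fun k _ => by grind)

lemma sum_blk_parent_blk (hp : IsParentMap (n * m) p) (g : ℕ → ℕ → ℕ) :
    ∑ j ∈ Icc 2 (n * m), g (blk m (p j)) (blk m j)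
      = ∑ a ∈ Icc 1 n, ∑ c ∈ Icc 1 n, edgeCount m (n * m) p a c * g a c := by
  have hmaps : ∀ j ∈ Icc 2 (n * m), (blk m (p j), blk m j) ∈ Icc 1 n ×ˢ Icc 1 n := fun j hj =>
    mem_product.2 ⟨blk_mem_Icc (hp.parent_mem_Icc hj),
      blk_mem_Icc (Icc_subset_Icc_left one_le_two hj)⟩
  rw [← sum_fiberwise_of_maps_to hmaps, sum_product]
  refine sum_congr rfl fun a _ => sum_congr rfl fun c _ => ?_
  simp only [Prod.mk.injEq]
  rw [sum_congr rfl fun j hj => by rw [(mem_filter.1 hj).2.1, (mem_filter.1 hj).2.2], sum_const,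
    smul_eq_mul, edgeCount]

lemma sum_edgeCount_mul_edgeCount (hp : IsParentMap (n * m) p) :
    ∑ a ∈ Icc 1 n, ∑ b ∈ Ioc a n, ∑ c ∈ Ioc b n,
        edgeCount m (n * m) p a b * edgeCount m (n * m) p a c = cherryCount m (n * m) p := by
  calc _ = ∑ a ∈ Icc 1 n, ∑ c ∈ Icc 1 n, ∑ b ∈ Ioo a c,
        edgeCount m (n * m) p a b * edgeCount m (n * m) p a c :=
        sum_congr rfl fun a ha => sum_comm' fun b c => by
          simp only [mem_Ioc, mem_Icc, mem_Ioo] at ha ⊢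
          omega
    _ = ∑ a ∈ Icc 1 n, ∑ c ∈ Icc 1 n,
        edgeCount m (n * m) p a c * ∑ b ∈ Ioo a c, edgeCount m (n * m) p a b :=
        sum_congr rfl fun a _ => sum_congr rfl fun c _ => by rw [← sum_mul, mul_comm]
    _ = ∑ j ∈ Icc 2 (n * m), ∑ b ∈ Ioo (blk m (p j)) (blk m j),
          edgeCount m (n * m) p (blk m (p j)) b :=
        (sum_blk_parent_blk hp fun a c => ∑ b ∈ Ioo a c, edgeCount m (n * m) p a b).symm
    _ = cherryCount m (n * m) p :=
        sum_congr rfl fun j hj => (betweenCount_eq_sum_edgeCount (mem_Icc.1 hj).2 p _).symm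

lemma sum_mult_mul_mult (f : ParentSeq (n * m)) :
    ∑ a ∈ Icc 1 n, ∑ b ∈ Ioc a n, ∑ c ∈ Ioc b n, (mult n m f a b : ℝ) * (mult n m f a c : ℝ)
      = cherryCount m (n * m) (pval f) := by
  rw [← sum_edgeCount_mul_edgeCount (isParentMap_pval f)]
  push_cast
  refine sum_congr rfl fun a _ => sum_congr rfl fun b hb => sum_congr rfl fun c hc => ?_
  have hab := (mem_Ioc.1 hb).1
  rw [mult_eq_edgeCount f hab, mult_eq_edgeCount f (hab.trans (mem_Ioc.1 hc).1)]

end Multiplicities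

end Mori

/-- The total number of pairs of adjacent half-edges in `G^n_{m,β}` whose common vertex has
the smallest index is `(m(2+β)/β + m(m−1)(1+β)/β)·n + O(n^{2/(2+β)})` in expectation. -/
theorem total_adjacent_pairs_smallest_index (β : ℝ) (hβ : 0 < β) (m : ℕ) (hm : 1 ≤ m) :
    ∃ K : ℝ, 0 < K ∧ ∀ n : ℕ, 1 ≤ n →
      |moriE (n * m) β
          (fun f => ∑ a ∈ Finset.Icc 1 n, ∑ b ∈ Finset.Ioc a n, ∑ c ∈ Finset.Ioc b n,
            (mult n m f a b : ℝ) * (mult n m f a c : ℝ))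
        - ((m : ℝ) * (2 + β) / β + (m : ℝ) * ((m : ℝ) - 1) * (1 + β) / β) * (n : ℝ)|
        ≤ K * (n : ℝ) ^ (2 / (2 + β)) := by
  obtain ⟨K, hK, hcherry⟩ := Mori.exists_abs_expect_cherryCount_sub_le hβ hm
  refine ⟨K * (m : ℝ) ^ (2 / (2 + β)), by positivity, fun n hn => ?_⟩
  have hrate : ((m : ℝ) * (2 + β) / β + (m : ℝ) * ((m : ℝ) - 1) * (1 + β) / β) * n
      = (1 + m * (1 + β)) / β * (n * m : ℕ) := by
    push_cast
    ring
  have hpow : K * (m : ℝ) ^ (2 / (2 + β)) * (n : ℝ) ^ (2 / (2 + β))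
      = K * ((n * m : ℕ) : ℝ) ^ (2 / (2 + β)) := by
    rw [Nat.cast_mul, mul_comm (n : ℝ), Real.mul_rpow (Nat.cast_nonneg m) (Nat.cast_nonneg n),
      mul_assoc]
  simp only [Mori.sum_mult_mul_mult]
  rw [hrate, hpow]
  exact hcherry (n * m) (Nat.mul_pos hn hm)
end

section
/- Let β > 0 and let m ≥ 1 be an integer. There exists K > 0 depending only on m and β such that for all integers n ≥ 1 and all 1 ≤ a < b < c ≤ n, E[m(a,b)·m(b,c)] = (m²(1+β)²/(2+β)²) · (a·b^{2+β}·c^{1+β})^{−1/(2+β)} · (1+θ) for some real θ with |θ| ≤ K/a. -/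
open Finset

/-! The edges of the tree are asymptotically independent, up to factors `exp (O(1 / i))`, with
`P(v_s → v_i) ≈ (1 + β) / (2 + β) * (s / i) ^ (1 / (2 + β)) / s`.

Write `W_i(t)` for the attachment weight `d_t(v_i) + β` and `D_t` for the normalising denominator.
Then `W_i` is multiplied on average by `1 + 1 / D_{t+1}` at each step, and a product `W_i W_j` by
`1 + 2 / D_{t+1}`. As `D_t ≈ (2 + β) t`, such products over a time interval `[j, T]` are
`(T / j) ^ (1 / (2 + β))` and its square, with a relative error that telescopes to `O(1 / j)`.
Conditioning on `v_s → v_i` replaces the indicator of this edge by `W_i(s - 1) / D_s`, so the joint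
probability of `v_s → v_i` and `v_t → v_j` is found by following these weights up to time `t - 1`.
Summing over the blocks of `m` tree vertices, all at relative distance `O(1 / a)` from the block
ends, gives the multiplicities in the merged graph. -/

/-- The denominator `D_t = (2 + β)(t - 1) - 2` of the attachment probabilities of `v_t`, that is,
the total attachment weight of the tree on `t - 1` vertices. -/
noncomputable def moriDen (β : ℝ) (t : ℕ) : ℝ := (2 + β) * ((t : ℝ) - 1) - 2

lemma moriDen_succ (β : ℝ) (N : ℕ) : moriDen β (N + 1) = (2 + β) * N - 2 := by
  simp [moriDen]

lemma mul_le_moriDen_succ (β : ℝ) {N : ℕ} (hN : 1 ≤ N) : β * N ≤ moriDen β (N + 1) := by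
  have : (1 : ℝ) ≤ N := by exact_mod_cast hN
  rw [moriDen_succ]
  linarith

lemma moriDen_succ_pos {β : ℝ} (hβ : 0 < β) {N : ℕ} (hN : 1 ≤ N) : 0 < moriDen β (N + 1) :=
  lt_of_lt_of_le (by positivity) (mul_le_moriDen_succ β hN)

namespace ParentSeq

variable {N : ℕ}

/-- The parent sequence of length `N + 1` extending `f` by the parent `i` of `v_{N+1}`. -/
def snoc (f : ParentSeq N) (i : Set.Icc 1 N) : ParentSeq (N + 1) := fun t =>
  if h : (t : ℕ) ≤ N then f ⟨t, t.2.1, h⟩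
  else ⟨i, i.2.1, i.2.2.trans (Nat.le_sub_one_of_lt (not_le.mp h))⟩

/-- A parent sequence of length `N + 1` is one of length `N` together with the parent of
`v_{N+1}`. -/
def snocEquiv (hN : 1 ≤ N) : ParentSeq N × Set.Icc 1 N ≃ ParentSeq (N + 1) where
  toFun p := snoc p.1 p.2
  invFun g := (fun t => g ⟨t, t.2.1, t.2.2.trans N.le_succ⟩, g ⟨N + 1, Nat.succ_le_succ hN, le_rfl⟩)
  left_inv := by
    rintro ⟨f, i⟩
    refine Prod.ext (funext fun t => ?_) ?_
    · simp only [snoc, dif_pos t.2.2]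
    · simp only [snoc, dif_neg (Nat.not_succ_le_self N)]
      rfl
  right_inv g := by
    funext ⟨t, ht⟩
    by_cases h : t ≤ N
    · simp only [snoc, dif_pos h]
    · obtain rfl : t = N + 1 := by have := ht.2; omega
      simp only [snoc, dif_neg h]

instance : Unique (ParentSeq 1) where
  default t := absurd (t.2.1.trans t.2.2) (by decide)
  uniq _ := funext fun t => absurd (t.2.1.trans t.2.2) (by decide)

lemma pval_mem_Icc (f : ParentSeq N) {j : ℕ} (hj : j ∈ Icc 2 N) : pval f j ∈ Icc 1 (j - 1) := by
  rw [pval, dif_pos (mem_Icc.mp hj)]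
  exact mem_Icc.mpr (f _).2

lemma pval_of_notMem_Icc (f : ParentSeq N) {j : ℕ} (hj : j ∉ Icc 2 N) : pval f j = 0 :=
  dif_neg (mem_Icc.not.mp hj)

lemma pval_lt (f : ParentSeq N) {j : ℕ} (hj : 1 ≤ j) : pval f j < j := by
  by_cases h : j ∈ Icc 2 N
  · have := mem_Icc.mp (pval_mem_Icc f h)
    omega
  · rw [pval_of_notMem_Icc f h]
    omega

lemma pval_snoc_of_le (f : ParentSeq N) (i : Set.Icc 1 N) {j : ℕ} (hj : j ≤ N) :
    pval (snoc f i) j = pval f j := by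
  by_cases h : 2 ≤ j
  · simp [pval, snoc, h, hj, hj.trans N.le_succ]
  · simp [pval, h]

lemma pval_snoc_self (f : ParentSeq N) (i : Set.Icc 1 N) : pval (snoc f i) (N + 1) = i := by
  have : 1 ≤ N := i.2.1.trans i.2.2
  simp [pval, snoc, this]

lemma deg_snoc_of_le (f : ParentSeq N) (i : Set.Icc 1 N) {t : ℕ} (ht : t ≤ N) (k : ℕ) :
    deg (snoc f i) t k = deg f t k := by
  rw [deg, deg, filter_congr fun j hj => by
    rw [pval_snoc_of_le f i ((mem_Icc.mp hj).2.trans ht)]]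

lemma deg_succ (f : ParentSeq N) {t : ℕ} (ht : 1 ≤ t) (k : ℕ) :
    deg f (t + 1) k = deg f t k + if pval f (t + 1) = k then 1 else 0 := by
  rw [deg, deg, ← insert_Icc_right_eq_Icc_add_one (by omega), filter_insert]
  split_ifs <;> simp

lemma deg_self (f : ParentSeq N) (t : ℕ) : deg f t t = if 2 ≤ t then 1 else 0 := by
  rw [deg, filter_false_of_mem, card_empty, zero_add]
  intro j hj
  rw [mem_Icc] at hj
  exact ((pval_lt f (by omega)).trans_le hj.2).ne

lemma sum_deg (f : ParentSeq N) : ∑ i ∈ Icc 1 N, deg f N i = 2 * (N - 1) := by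
  have indegrees : ∑ i ∈ Icc 1 N, #{j ∈ Icc 2 N | pval f j = i} = #(Icc 2 N) := by
    refine (card_eq_sum_card_fiberwise fun j hj => ?_).symm
    have := mem_Icc.mp (pval_mem_Icc f hj)
    simp only [coe_Icc, Set.mem_Icc] at hj ⊢
    omega
  have outdegrees : ∑ i ∈ Icc 1 N, (if 2 ≤ i then 1 else 0) = #(Icc 2 N) := by
    rw [← sum_filter, ← card_eq_sum_ones]
    congr 1
    ext j
    simp only [mem_filter, mem_Icc]
    omega
  simp only [deg]
  rw [sum_add_distrib, indegrees, outdegrees, Nat.card_Icc]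
  omega

/-- The attachment weight `d_t(v_i) + β`. -/
noncomputable def weight (β : ℝ) (f : ParentSeq N) (t i : ℕ) : ℝ := deg f t i + β

/-- The indicator of the edge from `v_s` to `v_i`. -/
noncomputable def edge (f : ParentSeq N) (s i : ℕ) : ℝ := if pval f s = i then 1 else 0

lemma edge_snoc_of_le (f : ParentSeq N) (k : Set.Icc 1 N) {s : ℕ} (hs : s ≤ N) (i : ℕ) :
    edge (snoc f k) s i = edge f s i := by
  rw [edge, pval_snoc_of_le f k hs, edge]

lemma edge_snoc_self (f : ParentSeq N) (k : Set.Icc 1 N) (i : ℕ) :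
    edge (snoc f k) (N + 1) i = if (k : ℕ) = i then 1 else 0 := by
  rw [edge, pval_snoc_self]

lemma edge_mul_edge_of_ne (f : ParentSeq N) (s : ℕ) {i j : ℕ} (hij : i ≠ j) :
    edge f s i * edge f s j = 0 := by
  by_cases h : pval f s = i
  · rw [edge, edge, if_neg (h.trans_ne hij), mul_zero]
  · rw [edge, if_neg h, zero_mul]

lemma weight_succ (β : ℝ) (f : ParentSeq N) {t : ℕ} (ht : 1 ≤ t) (i : ℕ) :
    weight β f (t + 1) i = weight β f t i + edge f (t + 1) i := by
  simp only [weight, edge, deg_succ f ht, Nat.cast_add, Nat.cast_ite, Nat.cast_one, Nat.cast_zero]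
  ring

lemma weight_snoc (β : ℝ) (f : ParentSeq N) (k : Set.Icc 1 N) (i : ℕ) :
    weight β (snoc f k) (N + 1) i = weight β f N i + if (k : ℕ) = i then 1 else 0 := by
  rw [weight_succ β _ (k.2.1.trans k.2.2), edge_snoc_self, weight, deg_snoc_of_le f k le_rfl,
    weight]

lemma weight_self (β : ℝ) (f : ParentSeq N) {t : ℕ} (ht : 2 ≤ t) : weight β f t t = 1 + β := by
  rw [weight, deg_self, if_pos ht, Nat.cast_one]

lemma sum_weight (β : ℝ) (f : ParentSeq N) (hN : 1 ≤ N) :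
    ∑ i ∈ Icc 1 N, weight β f N i = moriDen β (N + 1) := by
  simp only [weight]
  rw [sum_add_distrib, ← Nat.cast_sum, sum_deg, moriDen_succ]
  simp only [sum_const, Nat.card_Icc, nsmul_eq_mul, Nat.add_sub_cancel, Nat.cast_mul,
    Nat.cast_sub hN, Nat.cast_ofNat, Nat.cast_one]
  ring

/-- The conditional expectation of `φ (f (N + 1))`, given that the parents of `v_2, …, v_N` are
those of `f`. -/
noncomputable def stepE (β : ℝ) (f : ParentSeq N) (φ : ℕ → ℝ) : ℝ :=
  ∑ i ∈ Icc 1 N, weight β f N i / moriDen β (N + 1) * φ i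

variable {β : ℝ}

lemma stepE_add (f : ParentSeq N) (φ ψ : ℕ → ℝ) :
    stepE β f (fun i => φ i + ψ i) = stepE β f φ + stepE β f ψ := by
  simp only [stepE, mul_add, sum_add_distrib]

lemma stepE_const (hβ : 0 < β) (hN : 1 ≤ N) (f : ParentSeq N) (c : ℝ) :
    stepE β f (fun _ => c) = c := by
  rw [stepE, ← sum_mul, ← sum_div, sum_weight β f hN,
    div_self (moriDen_succ_pos hβ hN).ne', one_mul]

lemma stepE_mul_indicator (f : ParentSeq N) (c : ℝ) {j : ℕ} (hj : j ∈ Icc 1 N) :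
    stepE β f (fun i => c * if i = j then 1 else 0) =
      c * weight β f N j / moriDen β (N + 1) := by
  simp only [stepE, mul_ite, mul_one, mul_zero]
  rw [sum_ite_eq', if_pos hj]
  ring

lemma moriP_snoc (f : ParentSeq N) (i : Set.Icc 1 N) :
    moriP β (snoc f i) = moriP β f * (weight β f N i / moriDen β (N + 1)) := by
  rw [moriP, ← insert_Icc_right_eq_Icc_add_one (Nat.succ_le_succ (i.2.1.trans i.2.2)),
    prod_insert (by simp), mul_comm, pval_snoc_self, Nat.add_sub_cancel, deg_snoc_of_le f i le_rfl]
  congr 1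
  refine prod_congr rfl fun t ht => ?_
  have := (mem_Icc.mp ht).2
  rw [pval_snoc_of_le f i this, deg_snoc_of_le f i ((t.sub_le 1).trans this)]

end ParentSeq

open ParentSeq

section MoriExpectation

variable {β : ℝ} {N : ℕ}

lemma moriE_succ (hN : 1 ≤ N) {X : ParentSeq (N + 1) → ℝ} {Φ : ParentSeq N → ℕ → ℝ}
    (h : ∀ f i, X (snoc f i) = Φ f i) : moriE (N + 1) β X = moriE N β fun f => stepE β f (Φ f) := by
  rw [moriE, ← (snocEquiv hN).sum_comp, Fintype.sum_prod_type]
  refine sum_congr rfl fun f _ => ?_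
  simp only [stepE]
  rw [mul_sum, sum_subtype _ (p := (· ∈ Set.Icc 1 N)) (fun _ => mem_Icc)]
  refine sum_congr rfl fun i _ => ?_
  change moriP β (snoc f i) * X (snoc f i) = _
  rw [moriP_snoc, h, mul_assoc]

lemma moriE_const_mul (c : ℝ) (X : ParentSeq N → ℝ) :
    moriE N β (fun f => c * X f) = c * moriE N β X := by
  simp only [moriE, mul_sum, mul_left_comm]

lemma moriE_sum {ι : Type*} (s : Finset ι) (X : ι → ParentSeq N → ℝ) :
    moriE N β (fun f => ∑ k ∈ s, X k f) = ∑ k ∈ s, moriE N β (X k) := by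
  simp only [moriE, mul_sum]
  exact sum_comm

lemma moriE_eq_of_snoc (hβ : 0 < β) {X : ∀ N, ParentSeq N → ℝ} {M : ℕ} (hM : 1 ≤ M)
    (hX : ∀ N, M ≤ N → ∀ f i, X (N + 1) (snoc f i) = X N f) (hMN : M ≤ N) :
    moriE N β (X N) = moriE M β (X M) := by
  induction N, hMN using Nat.le_induction with
  | base => rfl
  | succ N hMN ih =>
    have hN := hM.trans hMN
    rw [moriE_succ hN (Φ := fun f _ => X N f) (hX N hMN), ← ih]
    simp only [stepE_const hβ hN]

lemma moriE_const (hβ : 0 < β) (hN : 1 ≤ N) (c : ℝ) : moriE N β (fun _ => c) = c := by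
  rw [moriE_eq_of_snoc hβ (X := fun _ _ => c) le_rfl (fun _ _ _ _ => rfl) hN]
  simp [moriE, moriP]

lemma moriE_succ_mul_edge (hN : 1 ≤ N) {Y : ParentSeq N → ℝ} {Y' : ParentSeq (N + 1) → ℝ}
    (hY : ∀ f i, Y' (snoc f i) = Y f) {j : ℕ} (hj : j ∈ Icc 1 N) :
    moriE (N + 1) β (fun f => Y' f * edge f (N + 1) j) =
      moriE N β (fun f => Y f * weight β f N j) / moriDen β (N + 1) := by
  rw [moriE_succ hN (Φ := fun f i => Y f * if i = j then 1 else 0)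
    (fun f i => by rw [hY, edge_snoc_self]), div_eq_inv_mul, ← moriE_const_mul]
  simp only [stepE_mul_indicator _ _ hj, div_eq_inv_mul]

lemma moriE_succ_mul_weight (hβ : 0 < β) (hN : 1 ≤ N) {Y : ParentSeq N → ℝ}
    {Y' : ParentSeq (N + 1) → ℝ} (hY : ∀ f i, Y' (snoc f i) = Y f) {j : ℕ} (hj : j ∈ Icc 1 N) :
    moriE (N + 1) β (fun f => Y' f * weight β f (N + 1) j) =
      (1 + 1 / moriDen β (N + 1)) * moriE N β (fun f => Y f * weight β f N j) := by
  rw [moriE_succ hN (Φ := fun f i => Y f * weight β f N j + Y f * if i = j then 1 else 0)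
    (fun f i => by rw [hY, weight_snoc, mul_add]), ← moriE_const_mul]
  congr 1 with f
  rw [stepE_add, stepE_const hβ hN, stepE_mul_indicator _ _ hj]
  ring

lemma moriE_succ_weight_mul_weight (hβ : 0 < β) {i j : ℕ} (hi : i ∈ Icc 1 N) (hj : j ∈ Icc 1 N)
    (hij : i ≠ j) :
    moriE (N + 1) β (fun f => weight β f (N + 1) i * weight β f (N + 1) j) =
      (1 + 2 / moriDen β (N + 1)) * moriE N β (fun f => weight β f N i * weight β f N j) := by
  have hN : 1 ≤ N := (mem_Icc.mp hi).1.trans (mem_Icc.mp hi).2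
  have expand (f : ParentSeq N) (k : Set.Icc 1 N) :
      weight β (snoc f k) (N + 1) i * weight β (snoc f k) (N + 1) j =
        weight β f N i * weight β f N j + weight β f N j * (if (k : ℕ) = i then 1 else 0) +
          weight β f N i * (if (k : ℕ) = j then 1 else 0) := by
    have : ¬ ((k : ℕ) = i ∧ (k : ℕ) = j) := fun h => hij (h.1.symm.trans h.2)
    rw [weight_snoc, weight_snoc]
    split_ifs <;> first | exact absurd ⟨‹_›, ‹_›⟩ this | ring
  rw [moriE_succ hN (Φ := fun f k => weight β f N i * weight β f N j +
    weight β f N j * (if k = i then 1 else 0) + weight β f N i * (if k = j then 1 else 0)) expand,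
    ← moriE_const_mul]
  congr 1 with f
  rw [stepE_add, stepE_add, stepE_const hβ hN, stepE_mul_indicator _ _ hi,
    stepE_mul_indicator _ _ hj]
  ring

end MoriExpectation

/-- `x` and `y` are positive and agree up to a factor between `exp (-ε)` and `exp ε`. Error terms
`1 + O(1 / a)` are expressed as `LogClose (C / a)`, which makes them additive under products. -/
structure LogClose (ε x y : ℝ) : Prop where
  left_pos : 0 < x
  right_pos : 0 < y
  abs_log_sub_log_le : |Real.log x - Real.log y| ≤ ε

lemma logClose_iff {ε x y : ℝ} (hx : 0 < x) (hy : 0 < y) :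
    LogClose ε x y ↔ x ≤ Real.exp ε * y ∧ y ≤ Real.exp ε * x := by
  have upper {u v : ℝ} (hu : 0 < u) (hv : 0 < v) :
      Real.log u - Real.log v ≤ ε ↔ u ≤ Real.exp ε * v := by
    rw [← Real.log_div hu.ne' hv.ne', Real.log_le_iff_le_exp (div_pos hu hv), div_le_iff₀ hv]
  rw [← upper hx hy, ← upper hy hx]
  exact ⟨fun h => abs_sub_le_iff.mp h.3, fun h => ⟨hx, hy, abs_sub_le_iff.mpr h⟩⟩

namespace LogClose

variable {ε δ x y z w : ℝ}

lemma refl (hx : 0 < x) : LogClose 0 x x := ⟨hx, hx, by simp⟩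

lemma mono (h : LogClose ε x y) (hεδ : ε ≤ δ) : LogClose δ x y :=
  ⟨h.left_pos, h.right_pos, h.abs_log_sub_log_le.trans hεδ⟩

lemma trans (h : LogClose ε x y) (k : LogClose δ y z) : LogClose (ε + δ) x z :=
  ⟨h.left_pos, k.right_pos, (abs_sub_le _ _ _).trans
    (add_le_add h.abs_log_sub_log_le k.abs_log_sub_log_le)⟩

lemma mul (h : LogClose ε x y) (k : LogClose δ z w) : LogClose (ε + δ) (x * z) (y * w) where
  left_pos := mul_pos h.left_pos k.left_pos
  right_pos := mul_pos h.right_pos k.right_pos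
  abs_log_sub_log_le := by
    rw [Real.log_mul h.left_pos.ne' k.left_pos.ne', Real.log_mul h.right_pos.ne' k.right_pos.ne',
      add_sub_add_comm]
    exact (abs_add_le _ _).trans (add_le_add h.abs_log_sub_log_le k.abs_log_sub_log_le)

lemma inv (h : LogClose ε x y) : LogClose ε x⁻¹ y⁻¹ where
  left_pos := inv_pos.mpr h.left_pos
  right_pos := inv_pos.mpr h.right_pos
  abs_log_sub_log_le := by
    rw [Real.log_inv, Real.log_inv, neg_sub_neg, abs_sub_comm]
    exact h.abs_log_sub_log_le

lemma div (h : LogClose ε x y) (k : LogClose δ z w) : LogClose (ε + δ) (x / z) (y / w) := by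
  simpa only [div_eq_mul_inv] using h.mul k.inv

lemma const_mul {c : ℝ} (hc : 0 < c) (h : LogClose ε x y) : LogClose ε (c * x) (c * y) := by
  simpa only [zero_add] using (refl hc).mul h

lemma rpow (h : LogClose ε x y) (p : ℝ) : LogClose (|p| * ε) (x ^ p) (y ^ p) where
  left_pos := Real.rpow_pos_of_pos h.left_pos p
  right_pos := Real.rpow_pos_of_pos h.right_pos p
  abs_log_sub_log_le := by
    rw [Real.log_rpow h.left_pos, Real.log_rpow h.right_pos, ← mul_sub, abs_mul]
    exact mul_le_mul_of_nonneg_left h.abs_log_sub_log_le (abs_nonneg p)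

lemma nonneg (h : LogClose ε x y) : 0 ≤ ε := (abs_nonneg _).trans h.abs_log_sub_log_le

lemma sum {ι : Type*} {s : Finset ι} (hs : s.Nonempty) {f g : ι → ℝ}
    (h : ∀ k ∈ s, LogClose ε (f k) (g k)) : LogClose ε (∑ k ∈ s, f k) (∑ k ∈ s, g k) := by
  have bounds (k) (hk : k ∈ s) := (logClose_iff (h k hk).left_pos (h k hk).right_pos).mp (h k hk)
  rw [logClose_iff (sum_pos (fun k hk => (h k hk).left_pos) hs)
    (sum_pos (fun k hk => (h k hk).right_pos) hs), mul_sum, mul_sum]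
  exact ⟨sum_le_sum fun k hk => (bounds k hk).1, sum_le_sum fun k hk => (bounds k hk).2⟩

lemma of_abs_sub_le {a k : ℝ} (ha : 0 < a) (hx : a ≤ x) (hy : a ≤ y) (h : |x - y| ≤ k) :
    LogClose (k / a) x y := by
  have bound {u v : ℝ} (hv : a ≤ v) (huv : u - v ≤ k) : u ≤ Real.exp (k / a) * v := by
    have hk : 0 ≤ k := (abs_nonneg _).trans h
    calc u ≤ k / a * a + v := by rw [div_mul_cancel₀ k ha.ne']; linarith
      _ ≤ k / a * v + v := by gcongr
      _ = (k / a + 1) * v := by ring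
      _ ≤ Real.exp (k / a) * v := by gcongr; exacts [ha.le.trans hv, Real.add_one_le_exp _]
  rw [abs_sub_le_iff] at h
  exact (logClose_iff (ha.trans_le hx) (ha.trans_le hy)).mpr ⟨bound hy h.1, bound hx h.2⟩

lemma exists_eq_mul_one_add (h : LogClose ε x y) :
    ∃ θ : ℝ, |θ| ≤ ε * Real.exp ε ∧ x = y * (1 + θ) := by
  have hε := h.abs_log_sub_log_le
  have hε0 := h.nonneg
  set u := Real.log x - Real.log y with hu
  refine ⟨Real.exp u - 1, ?_, ?_⟩
  · have := Complex.norm_exp_sub_sum_le_norm_mul_exp u 1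
    simp only [range_one, sum_singleton, pow_zero, Nat.factorial_zero, Nat.cast_one, div_one,
      pow_one, Complex.norm_real, ← Complex.ofReal_exp] at this
    norm_cast at this
    calc |Real.exp u - 1| ≤ |u| * Real.exp |u| := this
      _ ≤ ε * Real.exp ε := by gcongr
  · rw [add_sub_cancel, hu, Real.exp_sub, Real.exp_log h.left_pos, Real.exp_log h.right_pos,
      mul_div_cancel₀ _ h.right_pos.ne']

end LogClose

lemma log_one_add_div_mem_Icc {c y : ℝ} (hc : 0 ≤ c) (hy : 0 < y) :
    Real.log (1 + c / y) ∈ Set.Icc (c / (y + c)) (c / y) := by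
  have h : 0 < 1 + c / y := by positivity
  constructor
  · have := Real.one_sub_inv_le_log_of_pos h
    have e : 1 - (1 + c / y)⁻¹ = c / (y + c) := by field_simp; ring
    rwa [e] at this
  · linarith [Real.log_le_sub_one_of_pos h]

lemma div_rpow_mul_div_rpow {x y z : ℝ} (hx : 0 < x) (hy : 0 < y) (hz : 0 < z) (p : ℝ) :
    (y / x) ^ p * (z / y) ^ p = (z / x) ^ p := by
  rw [← Real.mul_rpow (by positivity) (by positivity), mul_comm, div_mul_div_cancel₀ hy.ne']

/-- The relative errors for Móri trees are bounded by multiples of this constant: `D_{N+1}` is at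
least `β N` and differs from `(2 + β)(N + 1)` by `4 + β`. -/
noncomputable def moriErr (β : ℝ) : ℝ := (4 + β) / β

section Growth

variable {β : ℝ}

lemma one_le_moriErr (hβ : 0 < β) : 1 ≤ moriErr β := by
  rw [moriErr, one_le_div hβ]
  linarith

lemma logClose_cast_succ {N : ℕ} (hN : 1 ≤ N) : LogClose (1 / N) (N : ℝ) ((N + 1 : ℕ) : ℝ) := by
  have hN0 : (0 : ℝ) < N := by exact_mod_cast hN
  exact LogClose.of_abs_sub_le hN0 le_rfl (by simp) (by simp)

lemma logClose_moriDen_succ (hβ : 0 < β) {N : ℕ} (hN : 1 ≤ N) :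
    LogClose (moriErr β / N) (moriDen β (N + 1)) ((2 + β) * (N + 1 : ℕ)) := by
  have hN0 : (0 : ℝ) < N := by exact_mod_cast hN
  rw [moriErr, div_div]
  refine LogClose.of_abs_sub_le (by positivity) (mul_le_moriDen_succ β hN) ?_ ?_
  · push_cast
    nlinarith
  · rw [moriDen_succ, abs_le]
    push_cast
    constructor <;> linarith

/-- The error is written as a difference so that it telescopes in `logClose_of_recurrence`. -/
lemma logClose_one_add_div_moriDen (hβ : 0 < β) {c : ℝ} (hc0 : 0 ≤ c) (hc2 : c ≤ 2) {N : ℕ}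
    (hN : 1 ≤ N) :
    LogClose (moriErr β * (1 / N - 1 / (N + 1 : ℕ))) (1 + c / moriDen β (N + 1))
      ((((N + 1 : ℕ) : ℝ) / N) ^ (c / (2 + β))) := by
  have hN0 : (0 : ℝ) < N := by exact_mod_cast hN
  have hD0 := moriDen_succ_pos hβ hN
  have hDβ := mul_le_moriDen_succ β hN
  have hD := moriDen_succ β N
  set D := moriDen β (N + 1)
  have base : ((N + 1 : ℕ) : ℝ) / N = 1 + 1 / N := by field_simp; push_cast; ring
  have hlogD := log_one_add_div_mem_Icc hc0 hD0
  have hlogN := log_one_add_div_mem_Icc zero_le_one hN0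
  refine ⟨by positivity, by positivity, ?_⟩
  rw [Real.log_rpow (by positivity), base, abs_of_nonneg, sub_le_iff_le_add]
  · calc Real.log (1 + c / D) ≤ c / D := hlogD.2
      _ = (4 + β) * (c / (2 + β)) / (D * (N + 1)) + c / (2 + β) * (1 / (N + 1)) := by
        field_simp
        rw [hD]
        ring
      _ ≤ (4 + β) * 1 / (β * N * (N + 1)) + c / (2 + β) * Real.log (1 + 1 / N) := by
        gcongr
        · rw [div_le_one (by positivity)]
          linarith
        · exact hlogN.1
      _ = _ := by
        rw [moriErr]
        push_cast
        field_simp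
        ring
  · rw [sub_nonneg]
    calc c / (2 + β) * Real.log (1 + 1 / N) ≤ c / (2 + β) * (1 / N) := by gcongr; exact hlogN.2
      _ = c / ((2 + β) * N) := by rw [div_mul_div_comm, mul_one]
      _ ≤ c / (D + c) := by gcongr; linarith
      _ ≤ Real.log (1 + c / D) := hlogD.1

lemma logClose_of_recurrence (hβ : 0 < β) {c : ℝ} (hc0 : 0 ≤ c) (hc2 : c ≤ 2) {e : ℕ → ℝ}
    {j T : ℕ} (hj : 1 ≤ j) (hjT : j ≤ T) (he0 : 0 < e j)
    (he : ∀ u, j ≤ u → e (u + 1) = (1 + c / moriDen β (u + 1)) * e u) :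
    LogClose (moriErr β / j) (e T) (e j * ((T : ℝ) / j) ^ (c / (2 + β))) := by
  have hj0 : (0 : ℝ) < j := by exact_mod_cast hj
  have telescoped : LogClose (moriErr β * (1 / j - 1 / T)) (e T)
      (e j * ((T : ℝ) / j) ^ (c / (2 + β))) := by
    induction T, hjT using Nat.le_induction with
    | base => simpa [hj0.ne'] using LogClose.refl he0
    | succ T hjT ih =>
      have hT0 : (0 : ℝ) < T := by exact_mod_cast hj.trans hjT
      rw [he T hjT, ← div_rpow_mul_div_rpow hj0 hT0 (by positivity), mul_comm (_ ^ _),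
        mul_left_comm]
      refine ((logClose_one_add_div_moriDen hβ hc0 hc2 (hj.trans hjT)).mul ih).mono (le_of_eq ?_)
      ring
  refine telescoped.mono ?_
  rw [div_eq_mul_one_div (moriErr β)]
  exact mul_le_mul_of_nonneg_left (sub_le_self _ (by positivity))
    (zero_le_one.trans (one_le_moriErr hβ))

end Growth

/-- The asymptotic probability, as `x → ∞`, that in a Móri tree `v_y` is attached to `v_x`. -/
noncomputable def edgeDensity (β x y : ℝ) : ℝ := (1 + β) / (2 + β) * (y / x) ^ (1 / (2 + β)) / y

lemma edgeDensity_mul_mul_right (β x y : ℝ) {r : ℝ} (hr : r ≠ 0) :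
    edgeDensity β (x * r) (y * r) = edgeDensity β x y / r := by
  rw [edgeDensity, edgeDensity, mul_div_mul_right _ _ hr, div_div]

lemma edgeDensity_mul_edgeDensity {β : ℝ} (hβ : 0 < β) {x y z : ℝ} (hx : 0 < x) (hy : 0 < y)
    (hz : 0 < z) :
    edgeDensity β x y * edgeDensity β y z =
      (1 + β) ^ 2 / (2 + β) ^ 2 * (x * y ^ (2 + β) * z ^ (1 + β)) ^ (-(1 / (2 + β))) := by
  have exponent_y : (2 + β) * -(1 / (2 + β)) = -1 := by field_simp
  have exponent_z : (1 + β) * -(1 / (2 + β)) = 1 / (2 + β) - 1 := by field_simp; ring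
  rw [Real.mul_rpow (by positivity) (by positivity), Real.mul_rpow (by positivity) (by positivity),
    ← Real.rpow_mul hy.le, ← Real.rpow_mul hz.le, exponent_y, exponent_z, Real.rpow_neg_one,
    Real.rpow_sub_one hz.ne', Real.rpow_neg hx.le]
  calc edgeDensity β x y * edgeDensity β y z
      = (1 + β) ^ 2 / (2 + β) ^ 2 *
          ((y / x) ^ (1 / (2 + β)) * (z / y) ^ (1 / (2 + β))) / (y * z) := by
        rw [edgeDensity, edgeDensity]
        field_simp
    _ = _ := by
        rw [div_rpow_mul_div_rpow hx hy hz, Real.div_rpow hz.le hx.le]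
        field_simp

lemma logClose_edgeDensity {β : ℝ} (hβ : 0 < β) {ε x x' y y' : ℝ} (hx : LogClose ε x x')
    (hy : LogClose ε y y') : LogClose (2 * ε) (edgeDensity β x y) (edgeDensity β x' y') := by
  refine ((((hy.div hx).rpow _).const_mul (by positivity)).div hy).mono ?_
  have hε := hx.nonneg
  calc |1 / (2 + β)| * (ε + ε) + ε ≤ 1 / 2 * (ε + ε) + ε := by
        rw [abs_of_pos (by positivity)]
        gcongr
        linarith
    _ = 2 * ε := by ring

section EdgeProbabilities

variable {β : ℝ} {N i j r s t : ℕ}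

lemma moriErr_div_le_div (hβ : 0 < β) (hi : 1 ≤ i) (hij : i ≤ j) :
    moriErr β / j ≤ moriErr β / i :=
  div_le_div_of_nonneg_left (zero_le_one.trans (one_le_moriErr hβ)) (by exact_mod_cast hi)
    (by exact_mod_cast hij)

lemma logClose_rpow_div_moriDen_succ (hβ : 0 < β) {p : ℝ} (hp : |p| ≤ 1) (hj : 1 ≤ j)
    (hjN : j ≤ N) :
    LogClose (2 * moriErr β / j) (((N : ℝ) / j) ^ p / moriDen β (N + 1))
      ((((N + 1 : ℕ) : ℝ) / j) ^ p / ((2 + β) * (N + 1 : ℕ))) := by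
  have hN := hj.trans hjN
  have hj0 : (0 : ℝ) < j := by exact_mod_cast hj
  have power_error : |p| * (1 / N + 0) ≤ moriErr β / N := by
    rw [add_zero]
    have := one_le_moriErr hβ
    calc |p| * (1 / N) ≤ 1 * (1 / N) := by gcongr
      _ ≤ moriErr β / N := by rw [one_mul]; gcongr
  refine ((((logClose_cast_succ hN).div (LogClose.refl hj0)).rpow p).div
    (logClose_moriDen_succ hβ hN)).mono ?_
  linarith [moriErr_div_le_div hβ hj hjN, mul_div_assoc 2 (moriErr β) j]

lemma logClose_moriE_weight (hβ : 0 < β) (hi : 1 ≤ i) (hiN : i ≤ N) :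
    LogClose (2 * moriErr β / i) (moriE N β fun f => weight β f N i)
      ((1 + β) * ((N : ℝ) / i) ^ (1 / (2 + β))) := by
  have hi0 : (0 : ℝ) < i := by exact_mod_cast hi
  have hN0 : (0 : ℝ) < N := by exact_mod_cast hi.trans hiN
  have initial : LogClose (moriErr β / i) (moriE i β fun f => weight β f i i) (1 + β) := by
    simp only [weight, deg_self, moriE_const hβ hi]
    have hErr := zero_le_one.trans (one_le_moriErr hβ)
    by_cases h : 2 ≤ i
    · simpa only [if_pos h, Nat.cast_one] using (LogClose.refl (by positivity)).mono (by positivity)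
    · obtain rfl : i = 1 := by omega
      have error : 1 / β ≤ moriErr β / (1 : ℕ) := by
        rw [Nat.cast_one, div_one, moriErr]
        gcongr
        linarith
      refine (LogClose.of_abs_sub_le hβ ?_ ?_ ?_).mono error <;> simp
  have growth := logClose_of_recurrence hβ zero_le_one one_le_two
    (e := fun u => moriE u β fun f => weight β f u i) hi hiN initial.left_pos fun u hu => by
      simpa using moriE_succ_mul_weight hβ (hi.trans hu) (Y := fun _ => 1) (Y' := fun _ => 1)
        (fun _ _ => rfl) (mem_Icc.mpr ⟨hi, hu⟩)
  refine (growth.trans (initial.mul (LogClose.refl (by positivity)))).mono (le_of_eq ?_)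
  ring

lemma moriE_edge_mul_weight_succ (hβ : 0 < β) (hsN : s ≤ N) (hj : j ∈ Icc 1 N) :
    moriE (N + 1) β (fun f => edge f s i * weight β f (N + 1) j) =
      (1 + 1 / moriDen β (N + 1)) * moriE N β (fun f => edge f s i * weight β f N j) :=
  moriE_succ_mul_weight hβ ((mem_Icc.mp hj).1.trans (mem_Icc.mp hj).2)
    (fun f k => edge_snoc_of_le f k hsN i) hj

lemma abs_div_two_add_le_one (hβ : 0 < β) {c : ℝ} (hc0 : 0 ≤ c) (hc2 : c ≤ 2) :
    |c / (2 + β)| ≤ 1 := by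
  rw [abs_of_nonneg (by positivity), div_le_one (by positivity)]
  linarith

lemma logClose_moriE_edge (hβ : 0 < β) (hi : 1 ≤ i) (his : i < s) (hsN : s ≤ N) :
    LogClose (4 * moriErr β / i) (moriE N β fun f => edge f s i) (edgeDensity β i s) := by
  obtain ⟨r, rfl⟩ := Nat.exists_eq_add_one_of_ne_zero (Nat.ne_zero_of_lt his)
  have hir : i ≤ r := Nat.le_of_lt_succ his
  have condition : moriE N β (fun f => edge f (r + 1) i) =
      moriE r β (fun f => weight β f r i) / moriDen β (r + 1) := by
    rw [moriE_eq_of_snoc hβ (X := fun N f => edge f (r + 1) i) (Nat.le_add_left 1 r)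
      (fun N hN f k => edge_snoc_of_le f k hN i) hsN]
    simpa using moriE_succ_mul_edge (hi.trans hir) (Y := fun _ => 1) (Y' := fun _ => 1)
      (fun _ _ => rfl) (mem_Icc.mpr ⟨hi, hir⟩)
  have hD := moriDen_succ_pos hβ (hi.trans hir)
  have weights := (logClose_moriE_weight hβ hi hir).div (LogClose.refl hD)
  have denominator := (logClose_rpow_div_moriDen_succ hβ
    (abs_div_two_add_le_one hβ zero_le_one one_le_two) hi hir).const_mul
      (show 0 < 1 + β by positivity)
  rw [← mul_div_assoc] at denominator
  rw [condition]
  convert weights.trans denominator using 1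
  · ring
  · rw [edgeDensity]
    field_simp

lemma logClose_moriE_weight_mul_weight (hβ : 0 < β) (hi : 1 ≤ i) (hij : i < j) (hjN : j ≤ N) :
    LogClose (3 * moriErr β / i) (moriE N β fun f => weight β f N i * weight β f N j)
      ((1 + β) ^ 2 * ((j : ℝ) / i) ^ (1 / (2 + β)) * ((N : ℝ) / j) ^ (2 / (2 + β))) := by
  have hj : 1 ≤ j := hi.trans hij.le
  have hN0 : (0 : ℝ) < N := by exact_mod_cast hj.trans hjN
  have initial : LogClose (2 * moriErr β / i)
      (moriE j β fun f => weight β f j i * weight β f j j)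
      ((1 + β) ^ 2 * ((j : ℝ) / i) ^ (1 / (2 + β))) := by
    simp only [weight_self β _ (hi.trans_lt hij), mul_comm _ (1 + β), moriE_const_mul]
    rw [pow_two, mul_assoc]
    exact (logClose_moriE_weight hβ hi hij.le).const_mul (by positivity)
  have growth := logClose_of_recurrence hβ zero_le_two le_rfl
    (e := fun u => moriE u β fun f => weight β f u i * weight β f u j) hj hjN initial.left_pos
    fun u hu => moriE_succ_weight_mul_weight hβ (mem_Icc.mpr ⟨hi, hij.le.trans hu⟩)
      (mem_Icc.mpr ⟨hj, hu⟩) hij.ne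
  refine (growth.trans (initial.mul (LogClose.refl (by positivity)))).mono ?_
  linarith [moriErr_div_le_div hβ hi hij.le, mul_div_assoc 2 (moriErr β) i,
    mul_div_assoc 3 (moriErr β) i]

lemma logClose_moriE_edge_mul_weight_of_le (hβ : 0 < β) (hi : 1 ≤ i) (his : i < s) (hsj : s ≤ j)
    (hjN : j ≤ N) :
    LogClose (5 * moriErr β / i) (moriE N β fun f => edge f s i * weight β f N j)
      ((1 + β) * edgeDensity β i s * ((N : ℝ) / j) ^ (1 / (2 + β))) := by
  have hij : i ≤ j := his.le.trans hsj
  have hj0 : (0 : ℝ) < j := by exact_mod_cast hi.trans hij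
  have hN0 : (0 : ℝ) < N := by exact_mod_cast (hi.trans hij).trans hjN
  have initial : LogClose (4 * moriErr β / i) (moriE j β fun f => edge f s i * weight β f j j)
      ((1 + β) * edgeDensity β i s) := by
    simp only [weight_self β _ ((hi.trans_lt his).trans_le hsj), mul_comm _ (1 + β),
      moriE_const_mul]
    exact (logClose_moriE_edge hβ hi his hsj).const_mul (by positivity)
  have growth := logClose_of_recurrence hβ zero_le_one one_le_two
    (e := fun u => moriE u β fun f => edge f s i * weight β f u j) (hi.trans hij) hjN
    initial.left_pos fun u hu =>
      moriE_edge_mul_weight_succ hβ (hsj.trans hu) (mem_Icc.mpr ⟨hi.trans hij, hu⟩)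
  refine (growth.trans (initial.mul (LogClose.refl (by positivity)))).mono ?_
  linarith [moriErr_div_le_div hβ hi hij, mul_div_assoc 4 (moriErr β) i,
    mul_div_assoc 5 (moriErr β) i]

lemma moriE_edge_mul_weight_self (hj : 1 ≤ j) (hjr : j ≤ r) (hi : 1 ≤ i) (hij : i < j) :
    moriE (r + 1) β (fun f => edge f (r + 1) i * weight β f (r + 1) j) =
      moriE r β (fun f => weight β f r i * weight β f r j) / moriDen β (r + 1) := by
  have stationary (f : ParentSeq (r + 1)) :
      edge f (r + 1) i * weight β f (r + 1) j = weight β f r j * edge f (r + 1) i := by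
    rw [weight_succ β f (hj.trans hjr), mul_comm, add_mul, edge_mul_edge_of_ne f _ hij.ne',
      add_zero]
  simp only [stationary, mul_comm (weight β _ r i)]
  exact moriE_succ_mul_edge (hj.trans hjr)
    (fun f k => by rw [weight, deg_snoc_of_le f k le_rfl, weight])
    (mem_Icc.mpr ⟨hi, hij.le.trans hjr⟩)

lemma logClose_moriE_edge_mul_weight_of_lt (hβ : 0 < β) (hi : 1 ≤ i) (hij : i < j) (hjs : j < s)
    (hsN : s ≤ N) :
    LogClose (6 * moriErr β / i) (moriE N β fun f => edge f s i * weight β f N j)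
      ((1 + β) * edgeDensity β i s * ((N : ℝ) / j) ^ (1 / (2 + β))) := by
  obtain ⟨r, rfl⟩ := Nat.exists_eq_add_one_of_ne_zero (Nat.ne_zero_of_lt hjs)
  have hj : 1 ≤ j := hi.trans hij.le
  have hjr : j ≤ r := Nat.le_of_lt_succ hjs
  have hi0 : (0 : ℝ) < i := by exact_mod_cast hi
  have hj0 : (0 : ℝ) < j := by exact_mod_cast hj
  have hN0 : (0 : ℝ) < N := by exact_mod_cast (Nat.le_add_left 1 r).trans hsN
  have hD := moriDen_succ_pos hβ (hj.trans hjr)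
  have initial : LogClose (3 * moriErr β / i + 2 * moriErr β / j)
      (moriE (r + 1) β fun f => edge f (r + 1) i * weight β f (r + 1) j)
      ((1 + β) * edgeDensity β i (r + 1 : ℕ) * (((r + 1 : ℕ) : ℝ) / j) ^ (1 / (2 + β))) := by
    rw [moriE_edge_mul_weight_self hj hjr hi hij]
    have weights := (logClose_moriE_weight_mul_weight hβ hi hij hjr).div (LogClose.refl hD)
    have denominator := (logClose_rpow_div_moriDen_succ hβ
      (abs_div_two_add_le_one hβ zero_le_two le_rfl) hj hjr).const_mul
        (show 0 < (1 + β) ^ 2 * ((j : ℝ) / i) ^ (1 / (2 + β)) by positivity)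
    rw [← mul_div_assoc] at denominator
    convert weights.trans denominator using 1
    · ring
    · have square : (((r + 1 : ℕ) : ℝ) / j) ^ (2 / (2 + β)) =
          (((r + 1 : ℕ) : ℝ) / j) ^ (1 / (2 + β)) * (((r + 1 : ℕ) : ℝ) / j) ^ (1 / (2 + β)) := by
        rw [← Real.rpow_add (by positivity)]
        ring_nf
      rw [square, edgeDensity, ← div_rpow_mul_div_rpow hi0 hj0 (by positivity)]
      field_simp
  have growth := logClose_of_recurrence hβ zero_le_one one_le_two
    (e := fun u => moriE u β fun f => edge f (r + 1) i * weight β f u j) (Nat.le_add_left 1 r) hsN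
    initial.left_pos fun u hu =>
      moriE_edge_mul_weight_succ hβ hu (mem_Icc.mpr ⟨hj, hjs.le.trans hu⟩)
  rw [← div_rpow_mul_div_rpow hj0 (show (0 : ℝ) < (r + 1 : ℕ) by positivity) hN0, ← mul_assoc]
  refine (growth.trans (initial.mul (LogClose.refl (by positivity)))).mono ?_
  linarith [moriErr_div_le_div hβ hi hij.le, moriErr_div_le_div hβ hi (hij.trans hjs).le,
    mul_div_assoc 2 (moriErr β) j, mul_div_assoc 3 (moriErr β) i, mul_div_assoc 6 (moriErr β) i]

lemma logClose_moriE_edge_mul_edge (hβ : 0 < β) (hi : 1 ≤ i) (hij : i < j) (his : i < s)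
    (hst : s < t) (hjt : j < t) (htN : t ≤ N) :
    LogClose (8 * moriErr β / i) (moriE N β fun f => edge f s i * edge f t j)
      (edgeDensity β i s * edgeDensity β j t) := by
  obtain ⟨r, rfl⟩ := Nat.exists_eq_add_one_of_ne_zero (Nat.ne_zero_of_lt hst)
  have hj : 1 ≤ j := hi.trans hij.le
  have hjr : j ≤ r := Nat.le_of_lt_succ hjt
  have hsr : s ≤ r := Nat.le_of_lt_succ hst
  have condition : moriE N β (fun f => edge f s i * edge f (r + 1) j) =
      moriE r β (fun f => edge f s i * weight β f r j) / moriDen β (r + 1) := by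
    rw [moriE_eq_of_snoc hβ (X := fun N f => edge f s i * edge f (r + 1) j) (Nat.le_add_left 1 r)
      (fun N hN f k => by
        rw [edge_snoc_of_le f k hN, edge_snoc_of_le f k (hst.le.trans hN)]) htN]
    exact moriE_succ_mul_edge (hj.trans hjr) (fun f k => edge_snoc_of_le f k hsr i)
      (mem_Icc.mpr ⟨hj, hjr⟩)
  have joint : LogClose (6 * moriErr β / i) (moriE r β fun f => edge f s i * weight β f r j)
      ((1 + β) * edgeDensity β i s * ((r : ℝ) / j) ^ (1 / (2 + β))) := by
    rcases le_or_gt s j with hsj | hjs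
    · refine (logClose_moriE_edge_mul_weight_of_le hβ hi his hsj hjr).mono ?_
      have := one_le_moriErr hβ
      gcongr
      norm_num
    · exact logClose_moriE_edge_mul_weight_of_lt hβ hi hij hjs hsr
  have hD := moriDen_succ_pos hβ (hj.trans hjr)
  have hρ := (logClose_moriE_edge hβ hi his le_rfl).right_pos
  have denominator := (logClose_rpow_div_moriDen_succ hβ
    (abs_div_two_add_le_one hβ zero_le_one one_le_two) hj hjr).const_mul
      (show 0 < (1 + β) * edgeDensity β i s by positivity)
  rw [← mul_div_assoc] at denominator
  rw [condition]
  convert ((joint.div (LogClose.refl hD)).trans denominator).mono ?_ using 1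
  · rw [edgeDensity, edgeDensity]
    field_simp
  · linarith [moriErr_div_le_div hβ hi hij.le, mul_div_assoc 2 (moriErr β) j,
      mul_div_assoc 6 (moriErr β) i, mul_div_assoc 8 (moriErr β) i]

end EdgeProbabilities

lemma blk_mono (m : ℕ) : Monotone (blk m) := fun _ _ h =>
  Nat.add_le_add_right (Nat.div_le_div_right (Nat.sub_le_sub_right h 1)) 1

/-- The indices of the tree vertices that are merged into `u_a`. -/
def block (m a : ℕ) : Finset ℕ := Ioc ((a - 1) * m) (a * m)

section Blocks

variable {m a b d i s : ℕ}

lemma card_block (ha : 1 ≤ a) : #(block m a) = m := by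
  rw [block, Nat.card_Ioc, ← Nat.sub_mul, Nat.sub_sub_self ha, one_mul]

lemma blk_eq_iff_mem_block (hm : 1 ≤ m) (ha : 1 ≤ a) (hs : 1 ≤ s) :
    blk m s = a ↔ s ∈ block m a := by
  obtain ⟨k, rfl⟩ := Nat.exists_eq_add_of_le' ha
  rw [blk, Nat.add_right_cancel_iff, Nat.div_eq_iff hm, block, mem_Ioc, Nat.add_sub_cancel,
    Nat.succ_mul]
  omega

lemma lt_of_mem_block (hab : a < b) (hi : i ∈ block m a) (hs : s ∈ block m b) : i < s :=
  calc i ≤ a * m := (mem_Ioc.mp hi).2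
    _ ≤ (b - 1) * m := Nat.mul_le_mul_right m (Nat.le_sub_one_of_lt hab)
    _ < s := (mem_Ioc.mp hs).1

lemma le_of_mem_block (hm : 1 ≤ m) (hi : i ∈ block m a) : a ≤ i := by
  have := (mem_Ioc.mp hi).1
  have : (a - 1) * 1 ≤ (a - 1) * m := Nat.mul_le_mul_left _ hm
  omega

lemma logClose_of_mem_block (ha : 1 ≤ a) (had : a ≤ d) (hm : 1 ≤ m) (hi : i ∈ block m d) :
    LogClose ((m : ℝ) / a) (i : ℝ) ((d : ℝ) * m) := by
  refine LogClose.of_abs_sub_le (by exact_mod_cast ha)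
    (by exact_mod_cast had.trans (le_of_mem_block hm hi))
    (by exact_mod_cast had.trans (Nat.le_mul_of_pos_right d hm)) ?_
  have upper : (i : ℝ) ≤ d * m := by exact_mod_cast (mem_Ioc.mp hi).2
  have lower : ((d : ℝ) - 1) * m ≤ i := by
    have := (mem_Ioc.mp hi).1.le
    rw [← Nat.cast_pred (ha.trans had)]
    exact_mod_cast this
  rw [abs_le]
  constructor <;> linarith

end Blocks

section MergedGraph

variable {β : ℝ} {m n a b c : ℕ}

lemma mult_eq_sum_edge (hm : 1 ≤ m) (ha : 1 ≤ a) (hab : a < b) (hbn : b ≤ n)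
    (f : ParentSeq (n * m)) :
    (mult n m f a b : ℝ) = ∑ p ∈ block m a ×ˢ block m b, edge f p.2 p.1 := by
  have crossing : {t ∈ Icc 2 (n * m) | (blk m t = a ∧ blk m (pval f t) = b) ∨
      (blk m t = b ∧ blk m (pval f t) = a)} = {t ∈ block m b | pval f t ∈ block m a} := by
    ext t
    simp only [mem_filter]
    constructor
    · rintro ⟨ht, ⟨hta, hpb⟩ | ⟨htb, hpa⟩⟩
      · have ht1 : 1 ≤ t := one_le_two.trans (mem_Icc.mp ht).1
        have := blk_mono m (pval_lt f ht1).le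
        omega
      · have ht1 : 1 ≤ t := one_le_two.trans (mem_Icc.mp ht).1
        have hp1 := (mem_Icc.mp (pval_mem_Icc f ht)).1
        exact ⟨(blk_eq_iff_mem_block hm (ha.trans hab.le) ht1).mp htb,
          (blk_eq_iff_mem_block hm ha hp1).mp hpa⟩
    · rintro ⟨htb, hpa⟩
      have hp1 := ha.trans (le_of_mem_block hm hpa)
      have htb2 := le_of_mem_block hm htb
      have htn : t ≤ n * m := (mem_Ioc.mp htb).2.trans (Nat.mul_le_mul_right m hbn)
      exact ⟨mem_Icc.mpr ⟨by omega, htn⟩,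
        .inr ⟨(blk_eq_iff_mem_block hm (by omega) (by omega)).mpr htb,
          (blk_eq_iff_mem_block hm ha hp1).mpr hpa⟩⟩
  rw [mult, crossing, card_filter, sum_product_right, Nat.cast_sum]
  refine sum_congr rfl fun t _ => ?_
  simp only [edge, sum_ite_eq, Nat.cast_ite, Nat.cast_one, Nat.cast_zero]

lemma logClose_moriE_mult_mul_mult (hβ : 0 < β) (hm : 1 ≤ m) (ha : 1 ≤ a) (hab : a < b)
    (hbc : b < c) (hcn : c ≤ n) :
    LogClose ((8 * moriErr β + 4 * m) / a)
      (moriE (n * m) β fun f => (mult n m f a b : ℝ) * mult n m f b c)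
      ((m : ℝ) ^ 2 * (edgeDensity β a b * edgeDensity β b c)) := by
  have hb := ha.trans hab.le
  have hc := hb.trans hbc.le
  have hm0 : (m : ℝ) ≠ 0 := by exact_mod_cast Nat.ne_of_gt hm
  have nonempty {d : ℕ} (hd : 1 ≤ d) : (block m d).Nonempty :=
    card_pos.mp (by rwa [card_block hd])
  have limit : (m : ℝ) ^ 2 * (edgeDensity β a b * edgeDensity β b c) =
      ∑ _p ∈ block m a ×ˢ block m b, ∑ _q ∈ block m b ×ˢ block m c,
        edgeDensity β (a * m) (b * m) * edgeDensity β (b * m) (c * m) := by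
    simp only [edgeDensity_mul_mul_right _ _ _ hm0, sum_const, card_product, card_block ha,
      card_block hb, card_block hc, nsmul_eq_mul, Nat.cast_mul]
    field_simp
  simp only [mult_eq_sum_edge hm ha hab (hbc.le.trans hcn), mult_eq_sum_edge hm hb hbc hcn,
    sum_mul_sum, moriE_sum, limit]
  refine LogClose.sum ((nonempty ha).product (nonempty hb)) fun ⟨i, s⟩ his =>
    LogClose.sum ((nonempty hb).product (nonempty hc)) fun ⟨j, t⟩ hjt => ?_
  obtain ⟨hi, hs⟩ := mem_product.mp his
  obtain ⟨hj, ht⟩ := mem_product.mp hjt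
  have hai := le_of_mem_block hm hi
  have htn : t ≤ n * m := (mem_Ioc.mp ht).2.trans (Nat.mul_le_mul_right m hcn)
  have edges := logClose_moriE_edge_mul_edge hβ (ha.trans hai) (lt_of_mem_block hab hi hj)
    (lt_of_mem_block hab hi hs) (lt_of_mem_block hbc hs ht) (lt_of_mem_block hbc hj ht) htn
  have first := logClose_edgeDensity hβ (logClose_of_mem_block ha le_rfl hm hi)
    (logClose_of_mem_block ha hab.le hm hs)
  have second := logClose_edgeDensity hβ (logClose_of_mem_block ha hab.le hm hj)
    (logClose_of_mem_block ha (hab.trans hbc).le hm ht)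
  refine (edges.trans (first.mul second)).mono ?_
  have := moriErr_div_le_div hβ ha hai
  calc 8 * moriErr β / i + (2 * (m / a) + 2 * (m / a))
      = 8 * (moriErr β / i) + 4 * m / a := by ring
    _ ≤ 8 * (moriErr β / a) + 4 * m / a := by gcongr
    _ = (8 * moriErr β + 4 * m) / a := by ring

end MergedGraph

/-- Expected number of pairs `(v_b,v_a), (v_c,v_b)` of adjacent half-edges in `G^n_{m,β}`
(common vertex of middle index). -/
theorem expected_adjacent_pairs_middle_index (β : ℝ) (hβ : 0 < β) (m : ℕ) (hm : 1 ≤ m) :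
    ∃ K : ℝ, 0 < K ∧ ∀ n : ℕ, 1 ≤ n → ∀ a b c : ℕ, 1 ≤ a → a < b → b < c → c ≤ n →
      ∃ θ : ℝ, |θ| ≤ K / (a : ℝ) ∧
        moriE (n * m) β (fun f => (mult n m f a b : ℝ) * (mult n m f b c : ℝ)) =
          ((m : ℝ) ^ 2 * (1 + β) ^ 2 / (2 + β) ^ 2)
            * ((a : ℝ) * (b : ℝ) ^ (2 + β) * (c : ℝ) ^ (1 + β)) ^ (-(1 / (2 + β)))
            * (1 + θ) := by
  have hErr := one_le_moriErr hβ
  set C := 8 * moriErr β + 4 * m with hC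
  have hC0 : 0 < C := by positivity
  refine ⟨C * Real.exp C, by positivity, fun n _ a b c ha hab hbc hcn => ?_⟩
  have ha1 : (1 : ℝ) ≤ a := by exact_mod_cast ha
  have hb0 : (0 : ℝ) < b := by exact_mod_cast (Nat.zero_lt_of_lt hab)
  have hc0 : (0 : ℝ) < c := by exact_mod_cast (Nat.zero_lt_of_lt hbc)
  obtain ⟨θ, hθ, expectation⟩ :=
    (logClose_moriE_mult_mul_mult hβ hm ha hab hbc hcn).exists_eq_mul_one_add
  refine ⟨θ, hθ.trans ?_, ?_⟩
  · rw [← hC, div_mul_eq_mul_div]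
    gcongr
    exact div_le_self hC0.le ha1
  · rw [expectation, edgeDensity_mul_edgeDensity hβ (zero_lt_one.trans_le ha1) hb0 hc0]
    ring
end
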